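/- arXiv:2211.10783 — 3 statements merged into one kernel-verified Lean document; each statement's English description precedes it below -/
import Mathlib

section
/- Let d ≥ 1, γ > 0, and let f : ℝ^d → ℝ be convex and M₂-Lipschitz with respect to the l₂-norm. Let f_γ(x) := E[f(x + γ·ẽ)], where ẽ is uniformly distributed on the unit l₁-ball B₁^d(1). Then for every x ∈ ℝ^d: f(x) ≤ f_γ(x) ≤ f(x) + (2/√d)·γ·M₂. -/
open MeasureTheory
open scoped ENNReal RealInnerProductSpace

noncomputable section

/-- The `l_p` norm on `EuclideanSpace ℝ (Fin d)` (with `p = ∞` giving the sup norm). -/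
def lpNorm {d : ℕ} (p : ℝ≥0∞) (x : EuclideanSpace ℝ (Fin d)) : ℝ :=
  if p = ∞ then ⨆ i, |x i| else (∑ i, |x i| ^ p.toReal) ^ (1 / p.toReal)

/-- The unit `l₁`-ball `B₁^d(1)`. -/
def l1Ball (d : ℕ) : Set (EuclideanSpace ℝ (Fin d)) := {u | ∑ i, |u i| ≤ 1}

/-- The Euclidean unit ball `B₂^d(1)`. -/
def l2Ball (d : ℕ) : Set (EuclideanSpace ℝ (Fin d)) := {u | ‖u‖ ≤ 1}

/-- The unit `l₁`-sphere `S₁^d(1)`. -/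
def l1Sphere (d : ℕ) : Set (EuclideanSpace ℝ (Fin d)) := {u | ∑ i, |u i| = 1}

/-- The Euclidean unit sphere `S₂^d(1)`. -/
def l2Sphere (d : ℕ) : Set (EuclideanSpace ℝ (Fin d)) := {u | ‖u‖ = 1}

/-- Uniform probability distribution on a solid body: normalized Lebesgue measure. -/
def uniformOn {d : ℕ} (S : Set (EuclideanSpace ℝ (Fin d))) :
    Measure (EuclideanSpace ℝ (Fin d)) :=
  (volume S)⁻¹ • volume.restrict S

/-- Uniform probability distribution on a hypersurface: normalized `(d-1)`-dimensional
Hausdorff measure. -/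
def uniformOnSphere {d : ℕ} (S : Set (EuclideanSpace ℝ (Fin d))) :
    Measure (EuclideanSpace ℝ (Fin d)) :=
  (μH[(d : ℝ) - 1] S)⁻¹ • (μH[(d : ℝ) - 1]).restrict S

/-- Coordinatewise sign vector `sign(e)`. -/
def signVec {d : ℕ} (e : EuclideanSpace ℝ (Fin d)) : EuclideanSpace ℝ (Fin d) :=
  (WithLp.equiv 2 (Fin d → ℝ)).symm (fun i => Real.sign (e i))

end

open scoped NNReal

/-!
If `N` is nonnegative and positively homogeneous of degree one on an `n`-dimensional space and `g`
is homogeneous of degree `k`, then writing `exp (-N x)` as the integral of `exp (-t)` over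
`t > N x` and rescaling `{N ≤ t}` to `{N ≤ 1}` gives
`∫ g * exp (-N) = Γ (n + k + 1) * ∫_{N ≤ 1} g`.
When `N` is the `l₁`-norm and `g` a monomial, the left-hand side factors over the coordinates, so
the moments of the uniform distribution on the `l₁`-ball are explicit; in particular
`E ‖ẽ‖² = 2 d / ((d + 1) (d + 2))`.
The lower bound is Jensen's inequality for the centred vector `ẽ`; the upper bound is the Lipschitz
estimate combined with `E ‖ẽ‖ ≤ √(E ‖ẽ‖²) ≤ 2 / √d`.
-/

section Gauge

lemma lintegral_Ioi_exp_neg (c : ℝ) :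
    ∫⁻ t in Set.Ioi c, ENNReal.ofReal (Real.exp (-t)) = ENNReal.ofReal (Real.exp (-c)) := by
  rw [← ofReal_integral_eq_lintegral_ofReal (integrableOn_exp_neg_Ioi c)
    (ae_of_all _ fun _ => (Real.exp_pos _).le), integral_exp_neg_Ioi]

lemma lintegral_Ioi_exp_neg_mul_rpow {s : ℝ} (hs : -1 < s) :
    ∫⁻ t in Set.Ioi (0 : ℝ), ENNReal.ofReal (Real.exp (-t) * t ^ s) =
      ENNReal.ofReal (Real.Gamma (s + 1)) := by
  have hs' : 0 < s + 1 := by linarith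
  have hint := Real.GammaIntegral_convergent hs'
  rw [Real.Gamma_eq_integral hs']
  simp only [add_sub_cancel_right] at hint ⊢
  refine (ofReal_integral_eq_lintegral_ofReal hint ?_).symm
  filter_upwards [ae_restrict_mem measurableSet_Ioi] with t ht
  exact mul_nonneg (Real.exp_pos _).le (Real.rpow_nonneg (Set.mem_Ioi.1 ht).le _)

lemma lintegral_exp_neg_eq_lintegral_measure_le {α : Type*} [MeasurableSpace α] (ν : Measure α)
    [SFinite ν] {N : α → ℝ} (hN : Measurable N) (hN_nonneg : ∀ x, 0 ≤ N x) :
    ∫⁻ x, ENNReal.ofReal (Real.exp (-N x)) ∂ν =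
      ∫⁻ t in Set.Ioi (0 : ℝ), ENNReal.ofReal (Real.exp (-t)) * ν {x | N x ≤ t} := by
  let w : ℝ → ℝ≥0∞ := fun t => ENNReal.ofReal (Real.exp (-t))
  let F : α × ℝ → ℝ≥0∞ := {p | N p.1 ≤ p.2}.indicator fun p => w p.2
  have hF : Measurable F := Measurable.indicator (by fun_prop)
    (measurableSet_le (hN.comp measurable_fst) measurable_snd)
  have hexp (x : α) : w (N x) = ∫⁻ t in Set.Ioi 0, F (x, t) := by
    have hset : (Set.Ici (N x) ∩ Set.Ioi 0 : Set ℝ) =ᵐ[volume] Set.Ioi (N x) := by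
      simpa only [Set.Ioi_inter_Ioi, sup_of_le_left (hN_nonneg x)] using
        (Ioi_ae_eq_Ici (μ := volume) (a := N x)).symm.inter (ae_eq_refl (Set.Ioi (0 : ℝ)))
    calc w (N x) = ∫⁻ t in Set.Ici (N x) ∩ Set.Ioi 0, w t := by
          rw [setLIntegral_congr hset, lintegral_Ioi_exp_neg]
      _ = _ := (setLIntegral_indicator measurableSet_Ici w).symm
  calc ∫⁻ x, w (N x) ∂ν
      = ∫⁻ t in Set.Ioi 0, ∫⁻ x, F (x, t) ∂ν := by
        simp_rw [hexp]
        exact lintegral_lintegral_swap hF.aemeasurable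
    _ = ∫⁻ t in Set.Ioi 0, w t * ν {x | N x ≤ t} := by
        refine lintegral_congr fun t => ?_
        exact lintegral_indicator_const (measurableSet_le hN measurable_const) (w t)

lemma lintegral_exp_neg_eq_Gamma_mul {α : Type*} [MeasurableSpace α] (ν : Measure α)
    [SFinite ν] {N : α → ℝ} (hN : Measurable N) (hN_nonneg : ∀ x, 0 ≤ N x) {s : ℝ} (hs : -1 < s)
    (hν : ∀ t, 0 < t → ν {x | N x ≤ t} = ENNReal.ofReal (t ^ s) * ν {x | N x ≤ 1}) :
    ∫⁻ x, ENNReal.ofReal (Real.exp (-N x)) ∂ν =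
      ENNReal.ofReal (Real.Gamma (s + 1)) * ν {x | N x ≤ 1} := by
  rw [lintegral_exp_neg_eq_lintegral_measure_le ν hN hN_nonneg,
    ← lintegral_Ioi_exp_neg_mul_rpow hs, ← lintegral_mul_const _ (by fun_prop)]
  refine setLIntegral_congr_fun measurableSet_Ioi fun t ht => ?_
  simp only [hν t ht, ENNReal.ofReal_mul (Real.exp_pos _).le, mul_assoc]

variable {E : Type*} [NormedAddCommGroup E] [NormedSpace ℝ E] [FiniteDimensional ℝ E]
  [MeasurableSpace E] [BorelSpace E]

lemma lintegral_eq_pow_finrank_mul_lintegral_comp_smul (μ : Measure E) [μ.IsAddHaarMeasure]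
    {g : E → ℝ≥0∞} (hg : Measurable g) {t : ℝ} (ht : 0 < t) :
    ∫⁻ x, g x ∂μ = ENNReal.ofReal (t ^ Module.finrank ℝ E) * ∫⁻ x, g (t • x) ∂μ := by
  have hpow : 0 < t ^ Module.finrank ℝ E := by positivity
  rw [← lintegral_map hg (measurable_const_smul t), Measure.map_addHaar_smul μ ht.ne',
    lintegral_smul_measure, smul_eq_mul, ← mul_assoc, abs_of_pos (inv_pos.2 hpow),
    ← ENNReal.ofReal_mul hpow.le, mul_inv_cancel₀ hpow.ne', ENNReal.ofReal_one, one_mul]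

lemma setLIntegral_le_eq_rpow_mul (μ : Measure E) [μ.IsAddHaarMeasure]
    {N : E → ℝ} (hN : Measurable N) (hN_smul : ∀ t, 0 < t → ∀ x, N (t • x) = t * N x)
    {g : E → ℝ≥0∞} (hg : Measurable g) {k : ℝ}
    (hg_smul : ∀ t, 0 < t → ∀ x, g (t • x) = ENNReal.ofReal (t ^ k) * g x) {t : ℝ} (ht : 0 < t) :
    ∫⁻ x in {x | N x ≤ t}, g x ∂μ =
      ENNReal.ofReal (t ^ (Module.finrank ℝ E + k)) * ∫⁻ x in {x | N x ≤ 1}, g x ∂μ := by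
  have hmeas (r : ℝ) : MeasurableSet {x | N x ≤ r} := measurableSet_le hN measurable_const
  have hindicator (x : E) : {x | N x ≤ t}.indicator g (t • x) =
      ENNReal.ofReal (t ^ k) * {x | N x ≤ 1}.indicator g x := by
    simp only [Set.indicator_apply, Set.mem_ofPred_eq, hN_smul t ht, hg_smul t ht,
      mul_le_iff_le_one_right ht, mul_ite, mul_zero]
  rw [← lintegral_indicator (hmeas t),
    lintegral_eq_pow_finrank_mul_lintegral_comp_smul μ (hg.indicator (hmeas t)) ht]
  simp_rw [hindicator]
  rw [lintegral_const_mul _ (hg.indicator (hmeas 1)), lintegral_indicator (hmeas 1), ← mul_assoc,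
    ← ENNReal.ofReal_mul (by positivity), Real.rpow_add ht, Real.rpow_natCast]

lemma lintegral_mul_exp_neg_eq_Gamma_mul (μ : Measure E) [μ.IsAddHaarMeasure]
    {N : E → ℝ} (hN : Measurable N) (hN_nonneg : ∀ x, 0 ≤ N x)
    (hN_smul : ∀ t, 0 < t → ∀ x, N (t • x) = t * N x)
    {g : E → ℝ≥0∞} (hg : Measurable g) {k : ℝ} (hk : -1 < Module.finrank ℝ E + k)
    (hg_smul : ∀ t, 0 < t → ∀ x, g (t • x) = ENNReal.ofReal (t ^ k) * g x) :
    ∫⁻ x, g x * ENNReal.ofReal (Real.exp (-N x)) ∂μ =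
      ENNReal.ofReal (Real.Gamma (Module.finrank ℝ E + k + 1)) *
        ∫⁻ x in {x | N x ≤ 1}, g x ∂μ := by
  have hmeas (r : ℝ) : MeasurableSet {x | N x ≤ r} := measurableSet_le hN measurable_const
  have hν := lintegral_exp_neg_eq_Gamma_mul (μ.withDensity g) hN hN_nonneg hk fun t ht => by
    simp only [withDensity_apply g (hmeas _),
      setLIntegral_le_eq_rpow_mul μ hN hN_smul hg hg_smul ht]
  rwa [withDensity_apply g (hmeas 1), lintegral_withDensity_eq_lintegral_mul _ hg (by fun_prop)]
    at hν

end Gauge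

section Dirichlet

lemma integral_abs_rpow_mul_exp_neg_abs {a : ℝ} (ha : -1 < a) :
    ∫ y : ℝ, |y| ^ a * Real.exp (-|y|) = 2 * Real.Gamma (a + 1) := by
  rw [integral_comp_abs (f := fun y => y ^ a * Real.exp (-y)),
    Real.Gamma_eq_integral (by linarith), add_sub_cancel_right]
  simp_rw [mul_comm]

variable {ι : Type*} [Fintype ι] {a : ι → ℝ}

lemma lintegral_prod_abs_rpow_mul_exp_neg (ha : ∀ i, -1 < a i) :
    ∫⁻ x : ι → ℝ, ENNReal.ofReal (∏ i, |x i| ^ a i) * ENNReal.ofReal (Real.exp (-∑ i, |x i|)) =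
      ENNReal.ofReal (∏ i, 2 * Real.Gamma (a i + 1)) := by
  have hprod (x : ι → ℝ) :
      ENNReal.ofReal (∏ i, |x i| ^ a i) * ENNReal.ofReal (Real.exp (-∑ i, |x i|)) =
        ENNReal.ofReal (∏ i, |x i| ^ a i * Real.exp (-|x i|)) := by
    rw [← ENNReal.ofReal_mul (by positivity), ← Finset.sum_neg_distrib, Real.exp_sum,
      ← Finset.prod_mul_distrib]
  have hint : Integrable fun x : ι → ℝ => ∏ i, |x i| ^ a i * Real.exp (-|x i|) := by
    refine Integrable.fintype_prod (f := fun i (y : ℝ) => |y| ^ a i * Real.exp (-|y|))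
      fun i => Integrable.of_integral_ne_zero ?_
    have hGamma := Real.Gamma_pos_of_pos (neg_lt_iff_pos_add.1 (ha i))
    rw [integral_abs_rpow_mul_exp_neg_abs (ha i)]
    positivity
  simp_rw [hprod]
  rw [← ofReal_integral_eq_lintegral_ofReal hint (ae_of_all _ fun x => by positivity),
    integral_fintype_prod_volume_eq_prod fun i (y : ℝ) => |y| ^ a i * Real.exp (-|y|)]
  simp_rw [fun i => integral_abs_rpow_mul_exp_neg_abs (ha i)]

lemma setLIntegral_prod_abs_rpow_sum_abs_le_one (ha : ∀ i, -1 < a i) :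
    ∫⁻ x in {x : ι → ℝ | ∑ i, |x i| ≤ 1}, ENNReal.ofReal (∏ i, |x i| ^ a i) =
      ENNReal.ofReal
        ((∏ i, 2 * Real.Gamma (a i + 1)) / Real.Gamma (Fintype.card ι + ∑ i, a i + 1)) := by
  have hdeg : -1 < Fintype.card ι + ∑ i, a i := by
    have hsum : 0 ≤ ∑ i, (a i + 1) := Finset.sum_nonneg fun i _ => by linarith [ha i]
    rw [Finset.sum_add_distrib, Finset.sum_const, Finset.card_univ, nsmul_one] at hsum
    linarith
  have hhom (t : ℝ) (ht : 0 < t) (x : ι → ℝ) : ENNReal.ofReal (∏ i, |(t • x) i| ^ a i) =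
      ENNReal.ofReal (t ^ ∑ i, a i) * ENNReal.ofReal (∏ i, |x i| ^ a i) := by
    rw [← ENNReal.ofReal_mul (by positivity), Real.rpow_sum_of_pos ht, ← Finset.prod_mul_distrib]
    simp only [Pi.smul_apply, smul_eq_mul, abs_mul, abs_of_pos ht,
      Real.mul_rpow ht.le (abs_nonneg _)]
  have hGamma := lintegral_mul_exp_neg_eq_Gamma_mul (volume : Measure (ι → ℝ))
    (N := fun x => ∑ i, |x i|) (g := fun x => ENNReal.ofReal (∏ i, |x i| ^ a i)) (by fun_prop)
    (fun x => by positivity) (fun t ht x => by simp [abs_mul, abs_of_pos ht, Finset.mul_sum])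
    (by fun_prop) (by rwa [Module.finrank_fintype_fun_eq_card]) hhom
  rw [lintegral_prod_abs_rpow_mul_exp_neg ha, Module.finrank_fintype_fun_eq_card] at hGamma
  have hpos : 0 < Real.Gamma (Fintype.card ι + ∑ i, a i + 1) :=
    Real.Gamma_pos_of_pos (by linarith)
  rw [ENNReal.ofReal_div_of_pos hpos, hGamma, mul_comm,
    ENNReal.mul_div_cancel_right (ENNReal.ofReal_pos.2 hpos).ne' ENNReal.ofReal_ne_top]

end Dirichlet

section Smoothing

variable {E : Type*} [NormedAddCommGroup E] [NormedSpace ℝ E] {f : E → ℝ} {K : ℝ≥0}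

lemma abs_comp_add_smul_sub_le (hf : LipschitzWith K f) (x : E) (γ : ℝ) (e : E) :
    |f (x + γ • e) - f x| ≤ K * |γ| * ‖e‖ := by
  simpa only [Real.dist_eq, dist_eq_norm, add_sub_cancel_left, norm_smul, Real.norm_eq_abs,
    mul_assoc] using hf.dist_le_mul (x + γ • e) x

variable [MeasurableSpace E] {μ : Measure E}

lemma integrable_add_smul [IsFiniteMeasure μ] (hμ : Integrable (fun e => e) μ) (x : E) (γ : ℝ) :
    Integrable (fun e => x + γ • e) μ :=
  (integrable_const x).add (hμ.smul γ)

lemma integrable_comp_add_smul [IsFiniteMeasure μ] (hf : LipschitzWith K f)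
    (hμ : Integrable (fun e => e) μ) (x : E) (γ : ℝ) : Integrable (fun e => f (x + γ • e)) μ := by
  have hmeas : AEStronglyMeasurable (fun e => f (x + γ • e)) μ :=
    hf.continuous.comp_aestronglyMeasurable (integrable_add_smul hμ x γ).aestronglyMeasurable
  have hdiff : Integrable (fun e => f (x + γ • e) - f x) μ :=
    (hμ.norm.const_mul (K * |γ|)).mono' (hmeas.sub aestronglyMeasurable_const)
      (ae_of_all _ (abs_comp_add_smul_sub_le hf x γ))
  exact (hdiff.add (integrable_const (f x))).congr (ae_of_all _ fun e => sub_add_cancel _ _)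

lemma le_integral_comp_add_smul [CompleteSpace E] [IsProbabilityMeasure μ]
    (hconv : ConvexOn ℝ Set.univ f) (hcont : Continuous f) (hμ : Integrable (fun e => e) μ)
    (hμ_mean : ∫ e, e ∂μ = 0) {x : E} {γ : ℝ} (hint : Integrable (fun e => f (x + γ • e)) μ) :
    f x ≤ ∫ e, f (x + γ • e) ∂μ := by
  have hmean : ∫ e, x + γ • e ∂μ = x := by
    have hsmul : Integrable (fun e => γ • e) μ := hμ.smul γ
    rw [integral_add (integrable_const x) hsmul, integral_smul, hμ_mean, smul_zero, add_zero,
      integral_const, probReal_univ, one_smul]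
  simpa only [hmean] using hconv.map_integral_le hcont.continuousOn isClosed_univ
    (ae_of_all _ fun e => Set.mem_univ (x + γ • e)) (integrable_add_smul hμ x γ) hint

lemma integral_comp_add_smul_le [IsProbabilityMeasure μ] (hf : LipschitzWith K f)
    (hμ : Integrable (fun e => e) μ) (x : E) (γ : ℝ) :
    ∫ e, f (x + γ • e) ∂μ ≤ f x + K * |γ| * ∫ e, ‖e‖ ∂μ := by
  have hnorm : Integrable (fun e => K * |γ| * ‖e‖) μ := hμ.norm.const_mul _
  calc ∫ e, f (x + γ • e) ∂μ
      ≤ ∫ e, f x + K * |γ| * ‖e‖ ∂μ :=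
        integral_mono (integrable_comp_add_smul hf hμ x γ) ((integrable_const _).add hnorm)
          fun e => sub_le_iff_le_add'.1 ((le_abs_self _).trans (abs_comp_add_smul_sub_le hf x γ e))
    _ = f x + K * |γ| * ∫ e, ‖e‖ ∂μ := by
        rw [integral_add (integrable_const _) hnorm, integral_const_mul]
        simp

lemma integral_le_sqrt_integral_sq {Ω : Type*} [MeasurableSpace Ω] {P : Measure Ω}
    [IsProbabilityMeasure P] {X : Ω → ℝ} (hX : MemLp X 2 P) :
    ∫ ω, X ω ∂P ≤ √(∫ ω, X ω ^ 2 ∂P) := by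
  have hvar := ProbabilityTheory.variance_nonneg X P
  rw [ProbabilityTheory.variance_eq_sub hX] at hvar
  exact Real.le_sqrt_of_sq_le (sub_nonneg.1 hvar)

lemma setIntegral_id_eq_zero_of_neg_eq [BorelSpace E] (μ : Measure E) [μ.IsNegInvariant]
    {S : Set E} (hS : -S = S) : ∫ x in S, x ∂μ = 0 := by
  have hneg := (Measure.measurePreserving_neg μ).setIntegral_preimage_emb
    (Homeomorph.neg E).measurableEmbedding (fun x => x) S
  rw [Set.neg_preimage, hS, integral_neg] at hneg
  have : IsAddTorsionFree E := .of_isTorsionFree ℝ E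
  exact self_eq_neg.1 hneg.symm

end Smoothing

section L1Ball

lemma norm_le_sum_abs {ι : Type*} [Fintype ι] (u : EuclideanSpace ℝ ι) : ‖u‖ ≤ ∑ i, |u i| := by
  rw [EuclideanSpace.norm_eq]
  simp only [Real.norm_eq_abs]
  exact Real.sqrt_le_iff.2
    ⟨by positivity, Finset.sum_sq_le_sq_sum_of_nonneg fun i _ => abs_nonneg (u i)⟩

variable {d : ℕ}

lemma isClosed_l1Ball : IsClosed (l1Ball d) :=
  isClosed_le (by fun_prop) continuous_const

lemma neg_l1Ball : -l1Ball d = l1Ball d := by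
  ext u
  simp [l1Ball]

lemma isCompact_l1Ball : IsCompact (l1Ball d) :=
  (isCompact_closedBall (0 : EuclideanSpace ℝ (Fin d)) 1).of_isClosed_subset isClosed_l1Ball
    fun u hu => mem_closedBall_zero_iff.2 ((norm_le_sum_abs u).trans hu)

lemma setLIntegral_l1Ball_prod_abs_rpow {a : Fin d → ℝ} (ha : ∀ i, -1 < a i) :
    ∫⁻ u in l1Ball d, ENNReal.ofReal (∏ i, |u i| ^ a i) =
      ENNReal.ofReal ((∏ i, 2 * Real.Gamma (a i + 1)) / Real.Gamma (d + ∑ i, a i + 1)) := by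
  rw [← (PiLp.volume_preserving_toLp (Fin d)).setLIntegral_comp_preimage
    isClosed_l1Ball.measurableSet (by fun_prop)]
  have hpi := setLIntegral_prod_abs_rpow_sum_abs_le_one ha
  rwa [Fintype.card_fin] at hpi

lemma volume_l1Ball : volume (l1Ball d) = ENNReal.ofReal (2 ^ d / d.factorial) := by
  simpa [Real.Gamma_nat_eq_factorial] using
    setLIntegral_l1Ball_prod_abs_rpow (d := d) (a := 0) (by simp)

lemma volume_l1Ball_ne_zero : volume (l1Ball d) ≠ 0 := by
  rw [volume_l1Ball]
  exact (ENNReal.ofReal_pos.2 (by positivity)).ne'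

lemma setLIntegral_l1Ball_sq (j : Fin d) :
    ∫⁻ u in l1Ball d, ENNReal.ofReal (u j ^ 2) =
      ENNReal.ofReal (2 * 2 ^ d / (d + 2).factorial) := by
  have hmonomial (u : EuclideanSpace ℝ (Fin d)) :
      ∏ i, |u i| ^ (Pi.single j 2 : Fin d → ℝ) i = u j ^ 2 := by
    rw [Finset.prod_eq_single j] <;> simp +contextual
  have hprod : ∏ i, 2 * Real.Gamma ((Pi.single j 2 : Fin d → ℝ) i + 1) = 2 * 2 ^ d := by
    have hGamma : ∏ i, Real.Gamma ((Pi.single j 2 : Fin d → ℝ) i + 1) = 2 := by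
      rw [Finset.prod_eq_single j (by simp +contextual) (by simp), Pi.single_eq_same]
      exact_mod_cast Real.Gamma_nat_eq_factorial 2
    rw [Finset.prod_mul_distrib, hGamma, Finset.prod_const, Finset.card_univ, Fintype.card_fin,
      mul_comm]
  have hfactorial : Real.Gamma (d + 2 + 1) = (d + 2).factorial := by
    exact_mod_cast Real.Gamma_nat_eq_factorial (d + 2)
  have hsingle (i : Fin d) : -1 < (Pi.single j 2 : Fin d → ℝ) i := by
    rw [Pi.single_apply]
    split_ifs <;> norm_num
  simpa only [hmonomial, hprod, Finset.sum_pi_single', Finset.mem_univ, if_true, hfactorial]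
    using setLIntegral_l1Ball_prod_abs_rpow hsingle

instance isProbabilityMeasure_uniformOn_l1Ball : IsProbabilityMeasure (uniformOn (l1Ball d)) :=
  ProbabilityTheory.cond_isProbabilityMeasure_of_finite volume_l1Ball_ne_zero
    isCompact_l1Ball.measure_ne_top

lemma integrable_uniformOn_l1Ball_of_continuous {F : Type*} [NormedAddCommGroup F]
    {g : EuclideanSpace ℝ (Fin d) → F} (hg : Continuous g) :
    Integrable g (uniformOn (l1Ball d)) :=
  (hg.continuousOn.integrableOn_compact isCompact_l1Ball).smul_measure
    (ENNReal.inv_ne_top.2 volume_l1Ball_ne_zero)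

lemma integral_id_uniformOn_l1Ball : ∫ u, u ∂uniformOn (l1Ball d) = 0 := by
  rw [uniformOn, integral_smul_measure, setIntegral_id_eq_zero_of_neg_eq volume neg_l1Ball,
    smul_zero]

lemma integral_sq_uniformOn_l1Ball (j : Fin d) :
    ∫ u, u j ^ 2 ∂uniformOn (l1Ball d) = 2 / ((d + 1) * (d + 2)) := by
  rw [integral_eq_lintegral_of_nonneg_ae (ae_of_all _ fun _ => sq_nonneg _) (by fun_prop),
    uniformOn, lintegral_smul_measure, setLIntegral_l1Ball_sq, volume_l1Ball, smul_eq_mul,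
    ENNReal.toReal_mul, ENNReal.toReal_inv, ENNReal.toReal_ofReal (by positivity),
    ENNReal.toReal_ofReal (by positivity), Nat.factorial_succ, Nat.factorial_succ]
  push_cast
  field_simp
  ring

lemma integral_norm_sq_uniformOn_l1Ball :
    ∫ u, ‖u‖ ^ 2 ∂uniformOn (l1Ball d) = 2 * d / ((d + 1) * (d + 2)) := by
  simp_rw [EuclideanSpace.real_norm_sq_eq]
  rw [integral_finsetSum _ fun i _ => integrable_uniformOn_l1Ball_of_continuous (by fun_prop)]
  simp_rw [integral_sq_uniformOn_l1Ball]
  rw [Finset.sum_const, Finset.card_univ, Fintype.card_fin, nsmul_eq_mul]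
  ring

lemma integral_norm_uniformOn_l1Ball_le (hd : 0 < d) :
    ∫ u, ‖u‖ ∂uniformOn (l1Ball d) ≤ 2 / √d := by
  have hnorm : MemLp (fun u => ‖u‖) 2 (uniformOn (l1Ball d)) :=
    (memLp_two_iff_integrable_sq (by fun_prop)).2
      (integrable_uniformOn_l1Ball_of_continuous (by fun_prop))
  have hd' : (0 : ℝ) < d := by exact_mod_cast hd
  calc ∫ u, ‖u‖ ∂uniformOn (l1Ball d)
      ≤ √(∫ u, ‖u‖ ^ 2 ∂uniformOn (l1Ball d)) := integral_le_sqrt_integral_sq hnorm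
    _ = √(2 * d / ((d + 1) * (d + 2))) := by rw [integral_norm_sq_uniformOn_l1Ball]
    _ ≤ √(2 ^ 2 / d) := by
        gcongr √?_
        rw [div_le_div_iff₀ (by positivity) hd']
        nlinarith
    _ = 2 / √d := by rw [Real.sqrt_div' _ hd'.le, Real.sqrt_sq zero_le_two]

end L1Ball

/-- For `f` convex and `M₂`-Lipschitz in the `l₂`-norm, the `l₁`-ball
smoothing `f_γ(x) = E[f(x + γ·ẽ)]`, `ẽ` uniform on `B₁^d(1)`, satisfies
`f(x) ≤ f_γ(x) ≤ f(x) + (2/√d)·γ·M₂`. -/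
theorem l1_smoothing_approximation_bounds {d : ℕ} (hd : 1 ≤ d) (γ M₂ : ℝ) (hγ : 0 < γ)
    (f fγ : EuclideanSpace ℝ (Fin d) → ℝ)
    (hconv : ConvexOn ℝ Set.univ f)
    (hlip : ∀ x y : EuclideanSpace ℝ (Fin d), |f y - f x| ≤ M₂ * ‖y - x‖)
    (hfγ : ∀ x, fγ x = ∫ e, f (x + γ • e) ∂(uniformOn (l1Ball d)))
    (x : EuclideanSpace ℝ (Fin d)) :
    f x ≤ fγ x ∧ fγ x ≤ f x + 2 / Real.sqrt d * γ * M₂ := by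
  have hM₂ : 0 ≤ M₂ := by
    simpa using (abs_nonneg _).trans (hlip 0 (EuclideanSpace.single ⟨0, hd⟩ 1))
  lift M₂ to ℝ≥0 using hM₂
  have hf : LipschitzWith M₂ f := LipschitzWith.of_dist_le_mul fun y z => by
    simpa only [dist_eq_norm, Real.norm_eq_abs] using hlip z y
  have hint : Integrable (fun e => e) (uniformOn (l1Ball d)) :=
    integrable_uniformOn_l1Ball_of_continuous continuous_id
  rw [hfγ]
  refine ⟨le_integral_comp_add_smul hconv hf.continuous hint integral_id_uniformOn_l1Ball
    (integrable_comp_add_smul hf hint x γ), ?_⟩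
  calc ∫ e, f (x + γ • e) ∂uniformOn (l1Ball d)
      ≤ f x + M₂ * |γ| * ∫ e, ‖e‖ ∂uniformOn (l1Ball d) := integral_comp_add_smul_le hf hint x γ
    _ ≤ f x + M₂ * |γ| * (2 / √d) := by gcongr; exact integral_norm_uniformOn_l1Ball_le hd
    _ = f x + 2 / √d * γ * M₂ := by rw [abs_of_pos hγ]; ring
end

section
/- Let d ≥ 1, γ > 0, p ∈ [1,2] with conjugate exponent q (1/p + 1/q = 1), and let f : ℝ^d → ℝ be convex and M-Lipschitz with respect to the l_p-norm. Let f_γ(x) := E[f(x + γ·ẽ)], where ẽ is uniformly distributed on the Euclidean unit ball B₂^d(1). Then f_γ has L-Lipschitz gradient with L = √d·M/γ: for all x, y ∈ ℝ^d, ‖∇f_γ(y) − ∇f_γ(x)‖_q ≤ (√d·M/γ)·‖y − x‖_p. -/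
open MeasureTheory
open scoped ENNReal RealInnerProductSpace

/-!
The gradient of `f_γ` at `x` is the mean of `∇f` over the ball of radius `γ` about `x`. Hence the
derivatives of `f_γ` at `x` and `y` in a direction `v` differ by an integral of a function bounded
by `M‖v‖_p` over the symmetric difference of two translated balls, divided by the volume of the
ball. Slicing along `y - x` bounds each half of that symmetric difference by `‖y - x‖` times the
volume of the `(d-1)`-dimensional ball of radius `γ`, and log-convexity of `Γ` bounds twice the
ratio of the two ball volumes by `√d / γ`. Duality between `l_p` and `l_q` turns the estimate on
directional derivatives into one on gradients.
-/

section Slicing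

open Metric

theorem volume_setOf_sub_notMem_le {s : Set ℝ} (hs : s.OrdConnected) (r : ℝ) :
    volume {x ∈ s | x - r ∉ s} ≤ ENNReal.ofReal |r| := by
  refine (Real.volume_le_diam _).trans (ediam_le fun x hx y hy ↦ ?_)
  have hsub {a b : ℝ} (ha : a ∈ s ∧ a - r ∉ s) (hb : b ∈ s ∧ b - r ∉ s) : a - b ≤ |r| := by
    by_contra! hlt
    rcases le_total 0 r with hr | hr
    · rw [abs_of_nonneg hr] at hlt
      exact ha.2 (hs.out hb.1 ha.1 ⟨by linarith, by linarith⟩)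
    · rw [abs_of_nonpos hr] at hlt
      exact hb.2 (hs.out hb.1 ha.1 ⟨by linarith, by linarith⟩)
  rw [edist_dist, Real.dist_eq]
  exact ENNReal.ofReal_le_ofReal (abs_sub_le_iff.2 ⟨hsub hx hy, hsub hy hx⟩)

theorem prod_volume_setOf_sub_notMem_le {Y : Type*} [MeasurableSpace Y] {μ : Measure Y}
    [SFinite μ] {s : Set (ℝ × Y)} {t : Set Y} (hs : MeasurableSet s) (ht : MeasurableSet t)
    (hst : Set.MapsTo Prod.snd s t) (hconn : ∀ y, {a : ℝ | (a, y) ∈ s}.OrdConnected) (r : ℝ) :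
    (volume.prod μ) {z ∈ s | (z.1 - r, z.2) ∉ s} ≤ ENNReal.ofReal |r| * μ t := by
  have hmeas : MeasurableSet {z ∈ s | (z.1 - r, z.2) ∉ s} :=
    hs.inter ((show Measurable fun z : ℝ × Y ↦ (z.1 - r, z.2) by fun_prop) hs.compl)
  rw [Measure.prod_apply_symm hmeas, ← setLIntegral_const, ← lintegral_indicator ht]
  refine lintegral_mono fun y ↦ ?_
  by_cases hy : y ∈ t
  · rw [Set.indicator_of_mem hy]
    exact volume_setOf_sub_notMem_le (hconn y) r
  · have hempty : (fun a : ℝ ↦ (a, y)) ⁻¹' {z ∈ s | (z.1 - r, z.2) ∉ s} = ∅ :=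
      Set.eq_empty_of_forall_notMem fun a ha ↦ hy (hst ha.1)
    simp [hempty]

variable {E : Type*} [NormedAddCommGroup E] [InnerProductSpace ℝ E] [FiniteDimensional ℝ E]
  [MeasurableSpace E] [BorelSpace E]

theorem measurePreserving_smul_add_orthogonal {u : E} (hu : ‖u‖ = 1) :
    MeasurePreserving (fun z : ℝ × (ℝ ∙ u)ᗮ ↦ z.1 • u + (z.2 : E)) := by
  have hline : MeasurePreserving (Prod.map (LinearIsometryEquiv.toSpanUnitSingleton (𝕜 := ℝ) u hu)
      (id : (ℝ ∙ u)ᗮ → (ℝ ∙ u)ᗮ)) (volume.prod volume) (volume.prod volume) :=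
    (LinearIsometryEquiv.measurePreserving _).prod (.id volume)
  exact (ℝ ∙ u).orthogonalDecomposition.symm.measurePreserving.comp
    ((WithLp.volume_preserving_toLp (ℝ ∙ u) (ℝ ∙ u)ᗮ).comp hline)

theorem volume_setOf_sub_smul_notMem_le_of_convex {u : E} (hu : ‖u‖ = 1) {s : Set E}
    (hs : MeasurableSet s) (hconv : Convex ℝ s) {t : Set (ℝ ∙ u)ᗮ} (ht : MeasurableSet t)
    (hst : Set.MapsTo (ℝ ∙ u)ᗮ.orthogonalProjectionOnto s t) (r : ℝ) :
    volume {x ∈ s | x - r • u ∉ s} ≤ ENNReal.ofReal |r| * volume t := by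
  have hφ := measurePreserving_smul_add_orthogonal hu
  set φ : ℝ × (ℝ ∙ u)ᗮ → E := fun z ↦ z.1 • u + (z.2 : E) with hφ_def
  have hmeas : MeasurableSet {x ∈ s | x - r • u ∉ s} :=
    hs.inter ((measurable_sub_const (r • u)) hs.compl)
  have hpre : φ ⁻¹' {x ∈ s | x - r • u ∉ s} = {z ∈ φ ⁻¹' s | (z.1 - r, z.2) ∉ φ ⁻¹' s} := by
    ext z
    simp [hφ_def, sub_smul, add_sub_right_comm]
  have hproj (z : ℝ × (ℝ ∙ u)ᗮ) : (ℝ ∙ u)ᗮ.orthogonalProjectionOnto (φ z) = z.2 := by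
    simp [hφ_def]
  rw [← hφ.measure_preimage hmeas.nullMeasurableSet, hpre]
  exact prod_volume_setOf_sub_notMem_le (hφ.measurable hs) ht (fun z hz ↦ hproj z ▸ hst hz)
    (fun y ↦ ((hconv.translate_preimage_left y.1).is_linear_preimage
      (IsLinearMap.isLinearMap_smul' u)).ordConnected) r

theorem volume_closedBall_sdiff_closedBall_add_smul_le {u : E} (hu : ‖u‖ = 1) (x : E) (γ r : ℝ) :
    volume (closedBall x γ \ closedBall (x + r • u) γ) ≤
      ENNReal.ofReal |r| * volume (closedBall (0 : (ℝ ∙ u)ᗮ) γ) := by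
  have htranslate : closedBall x γ \ closedBall (x + r • u) γ =
      {z ∈ closedBall x γ | z - r • u ∉ closedBall x γ} := by
    ext z
    simp [dist_eq_norm, sub_add_eq_sub_sub_swap]
  have hmaps : Set.MapsTo (ℝ ∙ u)ᗮ.orthogonalProjectionOnto (closedBall x γ)
      (closedBall ((ℝ ∙ u)ᗮ.orthogonalProjectionOnto x) γ) := fun z hz ↦ by
    rw [mem_closedBall, dist_eq_norm, ← map_sub]
    exact ((ℝ ∙ u)ᗮ.norm_orthogonalProjectionOnto_apply_le _).trans (mem_closedBall_iff_norm.1 hz)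
  rw [htranslate, ← Measure.addHaar_closedBall_center volume
    ((ℝ ∙ u)ᗮ.orthogonalProjectionOnto x) γ]
  exact volume_setOf_sub_smul_notMem_le_of_convex hu measurableSet_closedBall
    (convex_closedBall x γ) measurableSet_closedBall hmaps r

end Slicing

section BallVolume

open Real Metric Module
open scoped symmDiff

theorem Gamma_add_half_le_sqrt_mul_Gamma {x : ℝ} (hx : 0 < x) :
    Gamma (x + 1 / 2) ≤ √x * Gamma x := by
  have hΓ : 0 ≤ Gamma x := (Gamma_pos_of_pos hx).le
  calc Gamma (x + 1 / 2) = Gamma (1 / 2 * x + 1 / 2 * (x + 1)) := by ring_nf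
    _ ≤ Gamma x ^ (1 / 2 : ℝ) * Gamma (x + 1) ^ (1 / 2 : ℝ) :=
      Gamma_mul_add_mul_le_rpow_Gamma_mul_rpow_Gamma hx (by positivity) (by norm_num)
        (by norm_num) (by norm_num)
    _ = √(Gamma x) * (√x * √(Gamma x)) := by
      rw [← sqrt_eq_rpow, ← sqrt_eq_rpow, Gamma_add_one hx.ne', sqrt_mul hx.le]
    _ = √x * Gamma x := by rw [mul_left_comm, mul_self_sqrt hΓ]

theorem two_mul_Gamma_nat_succ_div_two_add_one_le (n : ℕ) :
    2 * Gamma ((n + 1 : ℕ) / 2 + 1) ≤ √(n + 1 : ℕ) * √π * Gamma (n / 2 + 1) := by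
  -- For `n = 0` log-convexity loses too much, but there both sides equal `√π`.
  rcases Nat.eq_zero_or_pos n with rfl | hn
  · have hΓ : Gamma (1 / 2 + 1) = 1 / 2 * √π := by
      rw [Gamma_add_one (by norm_num), Gamma_one_half_eq]
    simp only [Nat.cast_zero, zero_add, Nat.cast_one, hΓ, sqrt_one, zero_div, Gamma_one]
    linarith
  have hn1 : (1 : ℝ) ≤ n := by exact_mod_cast hn
  have hsqrt : 2 * √(n / 2 + 1 : ℝ) ≤ √(n + 1 : ℕ) * √π := by
    rw [← sqrt_mul (Nat.cast_nonneg _)]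
    refine le_sqrt_of_sq_le ?_
    rw [mul_pow, sq_sqrt (by positivity)]
    push_cast
    nlinarith [pi_gt_three]
  calc 2 * Gamma ((n + 1 : ℕ) / 2 + 1) = 2 * Gamma ((n / 2 + 1 : ℝ) + 1 / 2) := by
        push_cast; ring_nf
    _ ≤ 2 * √(n / 2 + 1 : ℝ) * Gamma (n / 2 + 1) := by
        rw [mul_assoc]
        gcongr
        exact Gamma_add_half_le_sqrt_mul_Gamma (by positivity)
    _ ≤ √(n + 1 : ℕ) * √π * Gamma (n / 2 + 1) := by
        gcongr

variable {E : Type*} [NormedAddCommGroup E] [InnerProductSpace ℝ E] [FiniteDimensional ℝ E]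
  [MeasurableSpace E] [BorelSpace E]

theorem volume_real_closedBall (x : E) {r : ℝ} (hr : 0 ≤ r) :
    volume.real (closedBall x r) =
      r ^ finrank ℝ E * (√π ^ finrank ℝ E / Gamma (finrank ℝ E / 2 + 1)) := by
  rcases subsingleton_or_nontrivial E with hE | hE
  · have hE0 : finrank ℝ E = 0 := finrank_zero_of_subsingleton
    have huniv : closedBall x r = Set.univ :=
      Set.eq_univ_of_forall fun y ↦ by simp [Subsingleton.elim y x, hr]
    have hpre := (stdOrthonormalBasis ℝ E).measurePreserving_repr.measure_preimage
      MeasurableSet.univ.nullMeasurableSet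
    have : IsEmpty (Fin (finrank ℝ E)) := by simp [hE0, Fin.isEmpty]
    rw [volume_euclideanSpace_eq_dirac, Set.preimage_univ,
      Measure.dirac_apply_of_mem (Set.mem_univ _)] at hpre
    simp [measureReal_def, huniv, hE0, hpre]
  · rw [measureReal_def, InnerProductSpace.volume_closedBall, ← ENNReal.ofReal_pow hr,
      ← ENNReal.ofReal_mul (by positivity), ENNReal.toReal_ofReal (by positivity)]

variable {F : Type*} [NormedAddCommGroup F] [InnerProductSpace ℝ F] [FiniteDimensional ℝ F]
  [MeasurableSpace F] [BorelSpace F]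

theorem two_mul_volume_real_closedBall_le (hEF : finrank ℝ F + 1 = finrank ℝ E) (x : F) (y : E)
    {γ : ℝ} (hγ : 0 < γ) :
    2 * volume.real (closedBall x γ) ≤ √(finrank ℝ E) / γ * volume.real (closedBall y γ) := by
  rw [volume_real_closedBall x hγ.le, volume_real_closedBall y hγ.le, ← hEF]
  have hF : 0 < Gamma ((finrank ℝ F : ℝ) / 2 + 1) := Gamma_pos_of_pos (by positivity)
  have hE : 0 < Gamma ((finrank ℝ F + 1 : ℕ) / 2 + 1) := Gamma_pos_of_pos (by positivity)
  generalize finrank ℝ F = n at *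
  have hΓ := two_mul_Gamma_nat_succ_div_two_add_one_le n
  calc 2 * (γ ^ n * (√π ^ n / Gamma (n / 2 + 1)))
      = γ ^ n * √π ^ n / (Gamma (n / 2 + 1) * Gamma ((n + 1 : ℕ) / 2 + 1)) *
          (2 * Gamma ((n + 1 : ℕ) / 2 + 1)) := by field_simp
    _ ≤ γ ^ n * √π ^ n / (Gamma (n / 2 + 1) * Gamma ((n + 1 : ℕ) / 2 + 1)) *
          (√(n + 1 : ℕ) * √π * Gamma (n / 2 + 1)) := by gcongr
    _ = √(n + 1 : ℕ) / γ * (γ ^ (n + 1) * (√π ^ (n + 1) / Gamma ((n + 1 : ℕ) / 2 + 1))) := by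
        field_simp
        ring

theorem two_mul_volume_real_closedBall_sdiff_le (x y z : E) {γ : ℝ} (hγ : 0 < γ) :
    2 * volume.real (closedBall x γ \ closedBall y γ) ≤
      √(finrank ℝ E) / γ * ‖y - x‖ * volume.real (closedBall z γ) := by
  rcases eq_or_ne x y with rfl | hxy
  · simp
  have hpos : ‖y - x‖ ≠ 0 := norm_ne_zero_iff.2 (sub_ne_zero.2 hxy.symm)
  set u : E := ‖y - x‖⁻¹ • (y - x) with hu_def
  have hu : ‖u‖ = 1 := by
    rw [hu_def, norm_smul, norm_inv, norm_norm, inv_mul_cancel₀ hpos]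
  have hy : x + ‖y - x‖ • u = y := by
    rw [hu_def, smul_inv_smul₀ hpos, add_sub_cancel]
  have hu0 : u ≠ 0 := norm_ne_zero_iff.1 (hu ▸ one_ne_zero)
  have hdim : finrank ℝ (ℝ ∙ u)ᗮ + 1 = finrank ℝ E := by
    rw [← (ℝ ∙ u).finrank_add_finrank_orthogonal, finrank_span_singleton hu0, add_comm]
  have hslice : volume.real (closedBall x γ \ closedBall y γ) ≤
      ‖y - x‖ * volume.real (closedBall (0 : (ℝ ∙ u)ᗮ) γ) := by
    have := volume_closedBall_sdiff_closedBall_add_smul_le hu x γ ‖y - x‖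
    rw [hy, abs_norm] at this
    have hfin : ENNReal.ofReal ‖y - x‖ * volume (closedBall (0 : (ℝ ∙ u)ᗮ) γ) ≠ ∞ :=
      ENNReal.mul_ne_top ENNReal.ofReal_ne_top measure_closedBall_lt_top.ne
    simpa [measureReal_def] using ENNReal.toReal_mono hfin this
  calc 2 * volume.real (closedBall x γ \ closedBall y γ)
      ≤ 2 * (‖y - x‖ * volume.real (closedBall (0 : (ℝ ∙ u)ᗮ) γ)) := by gcongr
    _ = ‖y - x‖ * (2 * volume.real (closedBall (0 : (ℝ ∙ u)ᗮ) γ)) := by ring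
    _ ≤ ‖y - x‖ * (√(finrank ℝ E) / γ * volume.real (closedBall z γ)) := by
        gcongr ‖y - x‖ * ?_
        exact two_mul_volume_real_closedBall_le hdim 0 z hγ
    _ = _ := by ring

theorem volume_real_symmDiff_closedBall_le (x y z : E) {γ : ℝ} (hγ : 0 < γ) :
    volume.real (closedBall x γ ∆ closedBall y γ) ≤
      √(finrank ℝ E) / γ * ‖y - x‖ * volume.real (closedBall z γ) := by
  rw [measureReal_symmDiff_eq measurableSet_closedBall measurableSet_closedBall
    measure_closedBall_lt_top.ne measure_closedBall_lt_top.ne]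
  have hxy := two_mul_volume_real_closedBall_sdiff_le x y z hγ
  have hyx := two_mul_volume_real_closedBall_sdiff_le y x z hγ
  rw [norm_sub_rev x y] at hyx
  linarith

end BallVolume

section BallAverage

open Metric Module
open scoped Pointwise symmDiff

section SetAverage

variable {X F : Type*} [MeasurableSpace X] [NormedAddCommGroup F] [NormedSpace ℝ F]

theorem norm_setIntegral_sub_setIntegral_le {μ : Measure X} {s t : Set X} (hs : MeasurableSet s)
    (ht : MeasurableSet t) (hμs : μ s ≠ ∞) (hμt : μ t ≠ ∞) {g : X → F}
    (hg : AEStronglyMeasurable g μ) {C : ℝ} (hC : ∀ x, ‖g x‖ ≤ C) :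
    ‖(∫ x in s, g x ∂μ) - ∫ x in t, g x ∂μ‖ ≤ C * μ.real (s ∆ t) := by
  have hint {r : Set X} (hr : μ r ≠ ∞) : IntegrableOn g r μ :=
    Measure.integrableOn_of_bounded hr hg (ae_of_all _ hC)
  have hbound {r r' : Set X} (hr : μ r ≠ ∞) : ‖∫ x in r \ r', g x ∂μ‖ ≤ C * μ.real (r \ r') :=
    norm_setIntegral_le_of_norm_le_const (measure_lt_top_mono Set.sdiff_subset hr.lt_top)
      fun x _ ↦ hC x
  rw [← integral_inter_add_sdiff ht (hint hμs), ← integral_inter_add_sdiff hs (hint hμt),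
    Set.inter_comm t s, add_sub_add_left_eq_sub, measureReal_symmDiff_eq hs ht hμs hμt, mul_add]
  exact (norm_sub_le _ _).trans (add_le_add (hbound hμs) (hbound hμt))

end SetAverage

theorem setAverage_closedBall_comp_add {E F : Type*} [NormedAddCommGroup E] [MeasurableSpace E]
    [BorelSpace E] [NormedAddCommGroup F] [NormedSpace ℝ F] (μ : Measure E)
    [μ.IsAddLeftInvariant] (g : E → F) (x : E) (γ : ℝ) :
    ⨍ e in closedBall 0 γ, g (x + e) ∂μ = ⨍ z in closedBall x γ, g z ∂μ := by
  have hpre : (x + ·) ⁻¹' closedBall x γ = closedBall 0 γ := by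
    ext e
    simp
  rw [setAverage_eq, setAverage_eq, ← hpre,
    (measurePreserving_add_left μ x).setIntegral_preimage_emb (measurableEmbedding_addLeft x),
    measureReal_def, measure_preimage_add, measureReal_def]

section AddHaar

variable {E F : Type*} [NormedAddCommGroup E] [NormedSpace ℝ E] [FiniteDimensional ℝ E]
  [MeasurableSpace E] [BorelSpace E] [NormedAddCommGroup F] [NormedSpace ℝ F]
  (μ : Measure E) [μ.IsAddHaarMeasure]

theorem setAverage_closedBall_comp_add_smul (g : E → F) (x : E) {γ : ℝ} (hγ : 0 < γ) :
    ⨍ e in closedBall 0 1, g (x + γ • e) ∂μ = ⨍ z in closedBall x γ, g z ∂μ := by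
  have hscale : γ • closedBall (0 : E) 1 = closedBall 0 γ := by
    rw [_root_.smul_closedBall γ 0 zero_le_one, smul_zero, mul_one, Real.norm_of_nonneg hγ.le]
  have hvol : μ.real (closedBall (0 : E) γ) =
      γ ^ finrank ℝ E * μ.real (closedBall (0 : E) 1) := by
    rw [← hscale, measureReal_def, Measure.addHaar_smul_of_nonneg μ hγ.le, ENNReal.toReal_mul,
      ENNReal.toReal_ofReal (by positivity), measureReal_def]
  rw [← setAverage_closedBall_comp_add μ g x γ, setAverage_eq, setAverage_eq, hvol,
    Measure.setIntegral_comp_smul_of_pos μ (fun e ↦ g (x + e)) _ hγ, hscale, smul_smul,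
    mul_inv_rev]

theorem hasFDerivAt_integral_comp_add [FiniteDimensional ℝ F] {ν : Measure E} [IsFiniteMeasure ν]
    (hνμ : ν ≪ μ) {f : E → F} {K : NNReal} (hf : LipschitzWith K f) {x : E}
    (hint : Integrable (fun e ↦ f (x + e)) ν) :
    HasFDerivAt (fun x ↦ ∫ e, f (x + e) ∂ν) (∫ e, fderiv ℝ f (x + e) ∂ν) x := by
  have hdiff : ∀ᵐ e ∂ν, DifferentiableAt ℝ f (x + e) :=
    hνμ.ae_le ((measurePreserving_add_left μ x).quasiMeasurePreserving.ae hf.ae_differentiableAt)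
  refine (hasFDerivAt_integral_of_dominated_loc_of_lip (bound := fun _ ↦ (K : ℝ))
    Filter.univ_mem ?_ hint ?_ ?_ (integrable_const _) ?_).2
  · exact .of_forall fun y ↦ (hf.continuous.comp (continuous_const_add y)).aestronglyMeasurable
  · exact ((measurable_fderiv ℝ f).comp (measurable_const_add x)).aestronglyMeasurable
  · refine .of_forall fun e ↦ ?_
    have htranslate : LipschitzWith K fun y ↦ f (y + e) :=
      .of_dist_le_mul fun y z ↦ by simpa using hf.dist_le_mul (y + e) (z + e)
    simpa [lipschitzOnWith_univ] using htranslate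
  · filter_upwards [hdiff] with e he
    exact (hasFDerivAt_comp_add_right e).2 he.hasFDerivAt

end AddHaar

/-- The average of `f` over the ball of radius `γ` about `x`, i.e. the smoothed approximation
`f_γ` of `f` evaluated at `x`. -/
noncomputable def ballAverage {E F : Type*} [NormedAddCommGroup E] [MeasureSpace E]
    [NormedAddCommGroup F] [NormedSpace ℝ F] (f : E → F) (γ : ℝ) (x : E) : F :=
  ⨍ z in closedBall x γ, f z

theorem hasFDerivAt_ballAverage {E F : Type*} [NormedAddCommGroup E] [NormedSpace ℝ E]
    [FiniteDimensional ℝ E] [MeasureSpace E] [BorelSpace E]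
    [(volume : Measure E).IsAddHaarMeasure] [NormedAddCommGroup F] [NormedSpace ℝ F]
    [FiniteDimensional ℝ F] {f : E → F} {K : NNReal} (hf : LipschitzWith K f) (γ : ℝ) (x : E) :
    HasFDerivAt (ballAverage f γ) (⨍ z in closedBall x γ, fderiv ℝ f z) x := by
  have hint : IntegrableOn (fun e ↦ f (x + e)) (closedBall 0 γ) :=
    (hf.continuous.comp (continuous_const_add x)).continuousOn.integrableOn_compact
      (isCompact_closedBall 0 γ)
  have : IsFiniteMeasure (volume.restrict (closedBall (0 : E) γ)) :=
    isFiniteMeasure_restrict.2 measure_closedBall_lt_top.ne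
  have haverage : ballAverage f γ = fun y ↦
      (volume.real (closedBall (0 : E) γ))⁻¹ • ∫ e in closedBall 0 γ, f (y + e) := by
    ext y
    rw [ballAverage, ← setAverage_closedBall_comp_add, setAverage_eq]
  rw [haverage, ← setAverage_closedBall_comp_add, setAverage_eq]
  exact (hasFDerivAt_integral_comp_add volume Measure.restrict_le_self.absolutelyContinuous
    hf hint).const_smul _

theorem norm_fderiv_apply_le_of_forall_norm_sub_le {E F : Type*} [NormedAddCommGroup E]
    [NormedSpace ℝ E] [NormedAddCommGroup F] [NormedSpace ℝ F] {f : E → F} {v x : E} {C : ℝ}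
    (hf : ∀ t : ℝ, ‖f (x + t • v) - f x‖ ≤ C * |t|) : ‖fderiv ℝ f x v‖ ≤ C := by
  have hC : 0 ≤ C := by simpa using (norm_nonneg _).trans (hf 1)
  by_cases hdiff : DifferentiableAt ℝ f x
  · have hline : HasDerivAt (fun t : ℝ ↦ f (x + t • v)) (fderiv ℝ f x v) 0 :=
      hdiff.hasFDerivAt.hasLineDerivAt v
    exact hline.le_of_lip' hC (.of_forall fun t ↦ by simpa using hf t)
  · simpa [fderiv_zero_of_not_differentiableAt hdiff]

variable {E F : Type*} [NormedAddCommGroup E] [InnerProductSpace ℝ E] [FiniteDimensional ℝ E]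
  [MeasurableSpace E] [BorelSpace E] [NormedAddCommGroup F] [NormedSpace ℝ F]

theorem norm_setAverage_closedBall_sub_le {g : E → F}
    (hg : AEStronglyMeasurable g volume) {C : ℝ} (hC : ∀ z, ‖g z‖ ≤ C) {γ : ℝ} (hγ : 0 < γ)
    (x y : E) :
    ‖(⨍ z in closedBall y γ, g z) - ⨍ z in closedBall x γ, g z‖ ≤
      √(finrank ℝ E) / γ * C * ‖y - x‖ := by
  have hC0 : 0 ≤ C := (norm_nonneg _).trans (hC 0)
  have hV : 0 < volume.real (closedBall x γ) :=
    ENNReal.toReal_pos (measure_closedBall_pos _ _ hγ).ne' measure_closedBall_lt_top.ne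
  have hVy : volume.real (closedBall y γ) = volume.real (closedBall x γ) := by
    simp only [measureReal_def, Measure.addHaar_closedBall_center]
  rw [setAverage_eq, setAverage_eq, hVy, ← smul_sub, norm_smul, norm_inv,
    Real.norm_of_nonneg hV.le, inv_mul_le_iff₀ hV]
  calc ‖(∫ z in closedBall y γ, g z) - ∫ z in closedBall x γ, g z‖
      ≤ C * volume.real (closedBall y γ ∆ closedBall x γ) :=
        norm_setIntegral_sub_setIntegral_le measurableSet_closedBall measurableSet_closedBall
          measure_closedBall_lt_top.ne measure_closedBall_lt_top.ne hg hC
    _ ≤ C * (√(finrank ℝ E) / γ * ‖x - y‖ * volume.real (closedBall x γ)) := by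
        gcongr
        exact volume_real_symmDiff_closedBall_le y x x hγ
    _ = volume.real (closedBall x γ) * (√(finrank ℝ E) / γ * C * ‖y - x‖) := by
        rw [norm_sub_rev]
        ring

theorem norm_fderiv_ballAverage_sub_le [FiniteDimensional ℝ F] {f : E → F} {K : NNReal}
    (hf : LipschitzWith K f) {v : E} {C : ℝ}
    (hv : ∀ (z : E) (t : ℝ), ‖f (z + t • v) - f z‖ ≤ C * |t|) {γ : ℝ} (hγ : 0 < γ) (x y : E) :
    ‖fderiv ℝ (ballAverage f γ) y v - fderiv ℝ (ballAverage f γ) x v‖ ≤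
      √(finrank ℝ E) / γ * C * ‖y - x‖ := by
  have hfderiv (x : E) :
      fderiv ℝ (ballAverage f γ) x v = ⨍ z in closedBall x γ, fderiv ℝ f z v := by
    have hint : IntegrableOn (fderiv ℝ f) (closedBall x γ) :=
      Measure.integrableOn_of_bounded measure_closedBall_lt_top.ne
        (measurable_fderiv ℝ f).aestronglyMeasurable
        (ae_of_all _ fun _ ↦ norm_fderiv_le_of_lipschitz ℝ hf)
    rw [(hasFDerivAt_ballAverage hf γ x).fderiv, setAverage_eq, setAverage_eq, smul_apply,
      ContinuousLinearMap.integral_apply hint]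
  rw [hfderiv, hfderiv]
  exact norm_setAverage_closedBall_sub_le
    ((measurable_fderiv ℝ f).aestronglyMeasurable.apply_continuousLinearMap v)
    (fun z ↦ norm_fderiv_apply_le_of_forall_norm_sub_le (hv z)) hγ x y

theorem inner_gradient_ballAverage_sub_le {f : E → ℝ} {K : NNReal} (hf : LipschitzWith K f)
    {v : E} {C : ℝ} (hv : ∀ (z : E) (t : ℝ), ‖f (z + t • v) - f z‖ ≤ C * |t|) {γ : ℝ}
    (hγ : 0 < γ) (x y : E) :
    ⟪gradient (ballAverage f γ) y - gradient (ballAverage f γ) x, v⟫ ≤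
      √(finrank ℝ E) / γ * C * ‖y - x‖ := by
  simp only [gradient, inner_sub_left, InnerProductSpace.toDual_symm_apply]
  exact (le_abs_self _).trans (norm_fderiv_ballAverage_sub_le hf hv hγ x y)

end BallAverage

section LpNorm

variable {d : ℕ} {p q : ℝ≥0∞} (x : EuclideanSpace ℝ (Fin d))

theorem lpNorm_top : lpNorm ∞ x = ⨆ i, |x i| :=
  if_pos rfl

theorem lpNorm_of_ne_top (hp : p ≠ ∞) :
    lpNorm p x = (∑ i, |x i| ^ p.toReal) ^ (1 / p.toReal) :=
  if_neg hp

theorem lpNorm_eq_norm_toLp (hp : 0 < p) : lpNorm p x = ‖WithLp.toLp p (WithLp.ofLp x)‖ := by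
  rcases eq_or_ne p ∞ with rfl | htop
  · rw [lpNorm_top, PiLp.norm_eq_ciSup]
    simp only [Real.norm_eq_abs]
  · rw [lpNorm_of_ne_top x htop, PiLp.norm_eq_sum (ENNReal.toReal_pos hp.ne' htop)]
    simp only [Real.norm_eq_abs]

theorem lpNorm_two : lpNorm 2 x = ‖x‖ :=
  lpNorm_eq_norm_toLp x two_pos

theorem lpNorm_smul (hp : 1 ≤ p) (t : ℝ) : lpNorm p (t • x) = |t| * lpNorm p x := by
  have : Fact (1 ≤ p) := ⟨hp⟩
  have hpos : 0 < p := zero_lt_one.trans_le hp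
  rw [lpNorm_eq_norm_toLp _ hpos, lpNorm_eq_norm_toLp _ hpos, WithLp.ofLp_smul, WithLp.toLp_smul,
    norm_smul, Real.norm_eq_abs]

theorem lpNorm_nonneg (p : ℝ≥0∞) : 0 ≤ lpNorm p x := by
  rcases eq_or_ne p ∞ with rfl | htop
  · rw [lpNorm_top]
    exact Real.iSup_nonneg fun i ↦ abs_nonneg (x i)
  · rw [lpNorm_of_ne_top x htop]
    positivity

theorem lpNorm_le_lpNorm_of_abs_le (p : ℝ≥0∞) {x y : EuclideanSpace ℝ (Fin d)}
    (hxy : ∀ i, |x i| ≤ |y i|) : lpNorm p x ≤ lpNorm p y := by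
  rcases eq_or_ne p ∞ with rfl | htop
  · simp only [lpNorm_top]
    exact ciSup_mono (Set.finite_range _).bddAbove hxy
  · simp only [lpNorm_of_ne_top _ htop]
    gcongr ?_ ^ _
    exact Finset.sum_le_sum fun i _ ↦ Real.rpow_le_rpow (abs_nonneg _) (hxy i) ENNReal.toReal_nonneg

theorem abs_apply_le_lpNorm (hp : 1 ≤ p) (i : Fin d) : |x i| ≤ lpNorm p x := by
  have : Fact (1 ≤ p) := ⟨hp⟩
  rw [lpNorm_eq_norm_toLp x (zero_lt_one.trans_le hp)]
  exact PiLp.norm_apply_le (WithLp.toLp p (WithLp.ofLp x)) i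

theorem lpNorm_pos_of_ne_zero (hp : 1 ≤ p) (hx : x ≠ 0) : 0 < lpNorm p x := by
  obtain ⟨i, hi⟩ : ∃ i, x i ≠ 0 := by
    by_contra! hzero
    exact hx (PiLp.ext hzero)
  exact (abs_pos.2 hi).trans_le (abs_apply_le_lpNorm x hp i)

theorem lpNorm_rpow_toReal (hp : 0 < p) (htop : p ≠ ∞) :
    lpNorm p x ^ p.toReal = ∑ i, |x i| ^ p.toReal := by
  rw [lpNorm_of_ne_top x htop, one_div, Real.rpow_inv_rpow (by positivity)
    (ENNReal.toReal_pos hp.ne' htop).ne']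

theorem lpNorm_anti (hp : 1 ≤ p) (hpq : p ≤ q) : lpNorm q x ≤ lpNorm p x := by
  have hnonneg := lpNorm_nonneg x p
  rcases eq_or_ne q ∞ with rfl | hq
  · rw [lpNorm_top]
    exact Real.iSup_le (abs_apply_le_lpNorm x hp) hnonneg
  have hppos : 0 < p := zero_lt_one.trans_le hp
  have hqpos : 0 < q := hppos.trans_le hpq
  have hptop : p ≠ ∞ := (hpq.trans_lt hq.lt_top).ne
  have hr : 0 ≤ q.toReal - p.toReal := sub_nonneg.2 (ENNReal.toReal_mono hq hpq)
  have hsplit {a : ℝ} (ha : 0 ≤ a) :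
      a ^ q.toReal = a ^ p.toReal * a ^ (q.toReal - p.toReal) := by
    rw [← Real.rpow_add_of_nonneg ha ENNReal.toReal_nonneg hr, add_sub_cancel]
  rw [← Real.rpow_le_rpow_iff (lpNorm_nonneg x q) hnonneg (ENNReal.toReal_pos hqpos.ne' hq)]
  calc lpNorm q x ^ q.toReal = ∑ i, |x i| ^ p.toReal * |x i| ^ (q.toReal - p.toReal) := by
        simp only [lpNorm_rpow_toReal x hqpos hq, hsplit (abs_nonneg _)]
    _ ≤ ∑ i, |x i| ^ p.toReal * lpNorm p x ^ (q.toReal - p.toReal) := by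
        gcongr with i
        exact abs_apply_le_lpNorm x hp i
    _ = lpNorm p x ^ q.toReal := by
        rw [← Finset.sum_mul, ← lpNorm_rpow_toReal x hppos hptop, hsplit hnonneg]

theorem exists_lpNorm_le_mul_norm (hp : 1 ≤ p) (d : ℕ) :
    ∃ C : NNReal, ∀ x : EuclideanSpace ℝ (Fin d), lpNorm p x ≤ C * ‖x‖ := by
  have : Fact (1 ≤ p) := ⟨hp⟩
  have hlip := (PiLp.lipschitzWith_toLp p fun _ : Fin d ↦ ℝ).comp
    (PiLp.lipschitzWith_ofLp 2 fun _ : Fin d ↦ ℝ)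
  exact ⟨_, fun x ↦ (lpNorm_eq_norm_toLp x (zero_lt_one.trans_le hp)).trans_le
    (hlip.norm_le_mul rfl x)⟩

theorem exists_lpNorm_le_one_sum_abs_mul_eq_lpNorm (p q : ℝ≥0∞) [p.HolderConjugate q] :
    ∃ g : EuclideanSpace ℝ (Fin d), lpNorm p g ≤ 1 ∧ ∑ i, |x i| * g i = lpNorm q x := by
  rcases eq_or_ne p ∞ with rfl | hp
  · obtain rfl : q = 1 := (ENNReal.HolderConjugate.eq_top_iff_eq_one ∞ q).1 rfl
    refine ⟨WithLp.toLp 2 1, ?_, ?_⟩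
    · rw [lpNorm_top]
      exact Real.iSup_le (fun i ↦ by simp) zero_le_one
    · simp [lpNorm_of_ne_top]
  rcases eq_or_ne q ∞ with rfl | hq
  · obtain rfl : p = 1 := (ENNReal.HolderConjugate.eq_top_iff_eq_one ∞ p).1 rfl
    rcases isEmpty_or_nonempty (Fin d) with hempty | hnonempty
    · exact ⟨0, by simp [lpNorm_of_ne_top], by simp [lpNorm_top]⟩
    obtain ⟨i, hi⟩ := exists_eq_ciSup_of_finite (f := fun i ↦ |x i|)
    refine ⟨EuclideanSpace.single i 1, ?_, ?_⟩
    · simp [lpNorm_of_ne_top, apply_ite abs]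
    · simp [lpNorm_top, hi]
  have hreal : q.toReal.HolderConjugate p.toReal :=
    (ENNReal.HolderConjugate.toReal_of_ne_top hp hq).symm
  obtain ⟨⟨g, hg, hgx⟩, -⟩ := NNReal.isGreatest_Lp Finset.univ (fun i ↦ ‖x i‖₊) hreal
  refine ⟨WithLp.toLp 2 fun i ↦ (g i : ℝ), ?_, ?_⟩
  · rw [lpNorm_of_ne_top _ hp]
    refine Real.rpow_le_one (by positivity) ?_ (by positivity)
    simpa using NNReal.coe_le_coe.2 hg
  · simpa [lpNorm_of_ne_top, hq] using congrArg NNReal.toReal hgx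

theorem exists_lpNorm_le_one_inner_eq_lpNorm (p q : ℝ≥0∞) [p.HolderConjugate q] :
    ∃ v : EuclideanSpace ℝ (Fin d), lpNorm p v ≤ 1 ∧ ⟪x, v⟫ = lpNorm q x := by
  obtain ⟨g, hg, hgx⟩ := exists_lpNorm_le_one_sum_abs_mul_eq_lpNorm x p q
  refine ⟨WithLp.toLp 2 fun i ↦ SignType.sign (x i) * g i,
    (lpNorm_le_lpNorm_of_abs_le p fun i ↦ ?_).trans hg, ?_⟩
  · rcases lt_trichotomy (x i) 0 with hi | hi | hi <;> simp [hi]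
  · simp only [← hgx, ← self_mul_sign, PiLp.inner_apply, RCLike.inner_apply, conj_trivial]
    exact Finset.sum_congr rfl fun i _ ↦ by ring

theorem lpNorm_le_of_forall_inner_le (p q : ℝ≥0∞) [p.HolderConjugate q] {K : ℝ} (hK : 0 ≤ K)
    (hx : ∀ v, ⟪x, v⟫ ≤ K * lpNorm p v) : lpNorm q x ≤ K := by
  obtain ⟨v, hv, hxv⟩ := exists_lpNorm_le_one_inner_eq_lpNorm x p q
  exact hxv ▸ (hx v).trans (mul_le_of_le_one_right hK hv)

end LpNorm

theorem exists_lipschitzWith_of_abs_sub_le_mul_lpNorm {d : ℕ} {p : ℝ≥0∞} (hp : 1 ≤ p)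
    {f : EuclideanSpace ℝ (Fin d) → ℝ} {M : ℝ}
    (hf : ∀ x y, |f y - f x| ≤ M * lpNorm p (y - x)) : ∃ K, LipschitzWith K f := by
  obtain ⟨C, hC⟩ := exists_lpNorm_le_mul_norm hp d
  refine ⟨M.toNNReal * C, .of_dist_le_mul fun x y ↦ ?_⟩
  calc dist (f x) (f y) = |f x - f y| := Real.dist_eq _ _
    _ ≤ M * lpNorm p (x - y) := hf y x
    _ ≤ M.toNNReal * lpNorm p (x - y) := by
        gcongr
        exacts [lpNorm_nonneg _ p, Real.le_coe_toNNReal M]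
    _ ≤ M.toNNReal * (C * ‖x - y‖) := by
        gcongr
        exact hC _
    _ = (M.toNNReal * C : NNReal) * dist x y := by rw [dist_eq_norm, NNReal.coe_mul, mul_assoc]

theorem nonneg_of_abs_le_mul_lpNorm_sub {d : ℕ} {p : ℝ≥0∞} (hp : 1 ≤ p)
    {x y : EuclideanSpace ℝ (Fin d)} (hxy : x ≠ y) {a M : ℝ}
    (h : |a| ≤ M * lpNorm p (y - x)) : 0 ≤ M :=
  nonneg_of_mul_nonneg_left ((abs_nonneg a).trans h)
    (lpNorm_pos_of_ne_zero (y - x) hp (sub_ne_zero.2 hxy.symm))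

theorem integral_comp_add_smul_uniformOn_l2Ball {d : ℕ} {F : Type*} [NormedAddCommGroup F]
    [NormedSpace ℝ F] (g : EuclideanSpace ℝ (Fin d) → F) {γ : ℝ} (hγ : 0 < γ)
    (x : EuclideanSpace ℝ (Fin d)) :
    ∫ e, g (x + γ • e) ∂uniformOn (l2Ball d) = ballAverage g γ x := by
  have hball : l2Ball d = Metric.closedBall 0 1 := by
    ext e
    simp [l2Ball]
  rw [ballAverage, ← setAverage_closedBall_comp_add_smul volume g x hγ, uniformOn, hball,
    integral_smul_measure, setAverage_eq, ENNReal.toReal_inv, measureReal_def]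

theorem l2_smoothing_gradient_lipschitz_general {d : ℕ} (γ M : ℝ) (hγ : 0 < γ)
    (p q : ℝ≥0∞) [p.HolderConjugate q] (f fγ : EuclideanSpace ℝ (Fin d) → ℝ)
    (hlip : ∀ x y : EuclideanSpace ℝ (Fin d), |f y - f x| ≤ M * lpNorm p (y - x))
    (hfγ : ∀ x, fγ x = ∫ e, f (x + γ • e) ∂(uniformOn (l2Ball d))) :
    Differentiable ℝ fγ ∧
      ∀ x y : EuclideanSpace ℝ (Fin d),
        lpNorm q (gradient fγ y - gradient fγ x) ≤ √d * M / γ * ‖y - x‖ := by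
  have hp : 1 ≤ p := ENNReal.HolderConjugate.one_le p q
  obtain ⟨K, hK⟩ := exists_lipschitzWith_of_abs_sub_le_mul_lpNorm hp hlip
  obtain rfl : fγ = ballAverage f γ :=
    funext fun x ↦ (hfγ x).trans (integral_comp_add_smul_uniformOn_l2Ball f hγ x)
  refine ⟨fun x ↦ (hasFDerivAt_ballAverage hK γ x).differentiableAt, fun x y ↦ ?_⟩
  have hbound : 0 ≤ M * ‖y - x‖ := by
    rcases eq_or_ne x y with rfl | hxy
    · simp
    · exact mul_nonneg (nonneg_of_abs_le_mul_lpNorm_sub hp hxy (hlip x y)) (norm_nonneg _)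
  have hconst : 0 ≤ √d * M / γ * ‖y - x‖ := by
    rw [div_mul_eq_mul_div, mul_assoc]
    positivity
  refine lpNorm_le_of_forall_inner_le _ p q hconst fun v ↦ ?_
  have hline (z : EuclideanSpace ℝ (Fin d)) (t : ℝ) :
      ‖f (z + t • v) - f z‖ ≤ M * lpNorm p v * |t| := by
    simpa [lpNorm_smul v hp, mul_assoc, mul_comm |t|] using hlip z (z + t • v)
  calc ⟪gradient (ballAverage f γ) y - gradient (ballAverage f γ) x, v⟫
      ≤ √d / γ * (M * lpNorm p v) * ‖y - x‖ := by
        simpa using inner_gradient_ballAverage_sub_le hK hline hγ x y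
    _ = √d * M / γ * ‖y - x‖ * lpNorm p v := by ring

/-- For `f` convex and `M`-Lipschitz in the `l_p`-norm (`p ∈ [1,2]`,
`1/p + 1/q = 1`), its Euclidean-ball smoothing `f_γ` has an `L`-Lipschitz gradient with
`L = √d·M/γ`, measured from the `l_p`-norm to the `l_q`-norm. -/
theorem l2_smoothing_gradient_lipschitz {d : ℕ} (hd : 1 ≤ d) (γ M : ℝ) (hγ : 0 < γ)
    (p q : ℝ≥0∞) (hp1 : 1 ≤ p) (hp2 : p ≤ 2) (hpq : 1 / p + 1 / q = 1)
    (f fγ : EuclideanSpace ℝ (Fin d) → ℝ)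
    (hconv : ConvexOn ℝ Set.univ f)
    (hlip : ∀ x y : EuclideanSpace ℝ (Fin d), |f y - f x| ≤ M * lpNorm p (y - x))
    (hfγ : ∀ x, fγ x = ∫ e, f (x + γ • e) ∂(uniformOn (l2Ball d))) :
    Differentiable ℝ fγ ∧
      ∀ x y : EuclideanSpace ℝ (Fin d),
        lpNorm q (gradient fγ y - gradient fγ x) ≤ Real.sqrt d * M / γ * lpNorm p (y - x) := by
  have : p.HolderConjugate q := ENNReal.holderConjugate_iff.2 (by simpa using hpq)
  obtain ⟨hdiff, hgrad⟩ := l2_smoothing_gradient_lipschitz_general γ M hγ p q f fγ hlip hfγ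
  have : Nonempty (Fin d) := ⟨⟨0, hd⟩⟩
  obtain ⟨z, hz⟩ := exists_ne (0 : EuclideanSpace ℝ (Fin d))
  have hM : 0 ≤ M := nonneg_of_abs_le_mul_lpNorm_sub hp1 hz (hlip z 0)
  refine ⟨hdiff, fun x y ↦ (hgrad x y).trans ?_⟩
  gcongr
  exact (lpNorm_two (y - x)).symm.trans_le (lpNorm_anti (y - x) hp1 hp2)
end

section
/- Let d ≥ 1, γ > 0, Δ ≥ 0, p ∈ [1,2] with conjugate exponent q (1/p + 1/q = 1). Let f(·,ξ) be M₂(ξ)-Lipschitz with respect to the l₂-norm with E[M₂(ξ)²] ≤ M₂², let δ : ℝ^d → ℝ satisfy |δ(x)| ≤ Δ for all x, and set f_δ(x,ξ) := f(x,ξ) + δ(x). Let e be uniformly distributed on the unit l₁-sphere S₁^d(1), independent of ξ, and define the two-point l₁-randomized gradient estimator g(x,ξ,e) := (d/(2γ))·(f_δ(x+γe,ξ) − f_δ(x−γe,ξ))·sign(e). Then for every x: E[‖g(x,ξ,e)‖_q²] ≤ κ(p,d)·(M₂² + d²Δ²/(12(1+√2)²γ²)), where κ(p,d) = 48(1+√2)²·d^{2−2/p}.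 -/
open MeasureTheory
open scoped ENNReal RealInnerProductSpace

/-!
A vector `w` with independent Laplace coordinates splits as `w = r • e`, where `e` is uniform on the
`l₁`-sphere and `r = ‖w‖₁` is independent of `e` with the Gamma law of shape `d`: the density of `w`
depends on `‖w‖₁` only, and each orthant part of the sphere lies in a hyperplane, so the cone and
Hausdorff measures on it are proportional. The Poincaré inequality of the one-dimensional Laplace
law tensorizes by the Efron–Stein inequality, so an odd `K`-Lipschitz function has second moment at
most `4 K ^ 2` under the law of `w`, with no dependence on the dimension. Since `r` concentrates at
`d`, this transfers to the sphere with a gain of `d ^ 2`, which cancels the factor of the estimator: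
`e ↦ f (x + γ • e) - f (x - γ • e)` is odd and `2 γ M₂`-Lipschitz, and the noise contributes at most
`2 Δ` to it.
-/

open ProbabilityTheory Set

section EfronStein

variable {α β : Type*} [MeasurableSpace α] [MeasurableSpace β]

lemma enorm_sq_eq_ofReal_sq (a : ℝ) : ‖a‖ₑ ^ 2 = ENNReal.ofReal (a ^ 2) := by
  rw [Real.enorm_eq_ofReal_abs, ← ENNReal.ofReal_pow (abs_nonneg a), sq_abs]

lemma lintegral_enorm_sub_const_sq {μ : Measure α} [IsProbabilityMeasure μ] {X : α → ℝ}
    (hX : MemLp X 2 μ) (c : ℝ) :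
    ∫⁻ a, ‖X a - c‖ₑ ^ 2 ∂μ = eVar[X; μ] + ‖μ[X] - c‖ₑ ^ 2 := by
  have hXc : MemLp (fun a => X a - c) 2 μ := hX.sub (memLp_const c)
  have hvar := variance_eq_sub hXc
  rw [variance_sub_const hX.1, integral_sub (hX.integrable one_le_two) (integrable_const c),
    integral_const, probReal_univ, one_smul] at hvar
  have hint : ∫ a, (X a - c) ^ 2 ∂μ = Var[X; μ] + (μ[X] - c) ^ 2 := by
    simp only [Pi.pow_apply] at hvar
    linarith
  simp only [enorm_sq_eq_ofReal_sq]
  rw [← ofReal_integral_eq_lintegral_ofReal hXc.integrable_sq (ae_of_all _ fun _ => sq_nonneg _),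
    hint, ENNReal.ofReal_add (variance_nonneg X μ) (sq_nonneg _), ofReal_variance hX]

lemma evariance_le_lintegral_enorm_sub_const_sq {μ : Measure α} [IsProbabilityMeasure μ]
    {X : α → ℝ} (hX : MemLp X 2 μ) (c : ℝ) : eVar[X; μ] ≤ ∫⁻ a, ‖X a - c‖ₑ ^ 2 ∂μ := by
  rw [lintegral_enorm_sub_const_sq hX c]
  exact le_self_add

lemma eLpNorm_two_sq {E : Type*} [NormedAddCommGroup E] (X : α → E) (μ : Measure α) :
    eLpNorm X 2 μ ^ 2 = ∫⁻ a, ‖X a‖ₑ ^ 2 ∂μ := by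
  simpa using eLpNorm_nnreal_pow_eq_lintegral (f := X) (μ := μ) (p := 2) two_ne_zero

lemma memLp_two_of_lintegral_enorm_sq_ne_top {E : Type*} [NormedAddCommGroup E] {X : α → E}
    {μ : Measure α} (hX : AEStronglyMeasurable X μ) (hfin : ∫⁻ a, ‖X a‖ₑ ^ 2 ∂μ ≠ ∞) :
    MemLp X 2 μ := by
  rw [← eLpNorm_two_sq] at hfin
  exact ⟨hX, lt_top_iff_ne_top.2 fun htop => hfin (by simp [htop])⟩

lemma enorm_integral_sq_le_lintegral {μ : Measure α} [IsProbabilityMeasure μ] {X : α → ℝ}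
    (hX : AEStronglyMeasurable X μ) : ‖μ[X]‖ₑ ^ 2 ≤ ∫⁻ a, ‖X a‖ₑ ^ 2 ∂μ := by
  have hL1 : ‖μ[X]‖ₑ ≤ eLpNorm X 1 μ :=
    eLpNorm_one_eq_lintegral_enorm (f := X) ▸ enorm_integral_le_lintegral_enorm X
  rw [← eLpNorm_two_sq]
  gcongr
  exact hL1.trans (eLpNorm_le_eLpNorm_of_exponent_le one_le_two hX)

lemma memLp_of_lipschitzWith {E F : Type*} [NormedAddCommGroup E] [NormedAddCommGroup F]
    [MeasurableSpace E] {μ : Measure E} [IsFiniteMeasure μ] {p : ℝ≥0∞} (hμ : MemLp id p μ)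
    {f : E → F} {K : NNReal} (hf : LipschitzWith K f) : MemLp f p μ := by
  have hcenter : LipschitzWith K fun x => f x - f 0 := by
    simpa using hf.sub (LipschitzWith.const (f 0))
  simpa [Function.comp_def, Pi.add_def] using
    (hcenter.comp_memLp (sub_self _) hμ).add (memLp_const (f 0))

lemma measurable_evariance_prodMk_left {ν : Measure β} [SFinite ν] {F : α × β → ℝ}
    (hF : Measurable F) : Measurable fun a => eVar[fun b => F (a, b); ν] := by
  have hmean : Measurable fun a => ∫ b, F (a, b) ∂ν :=
    hF.stronglyMeasurable.integral_prod_right'.measurable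
  exact Measurable.lintegral_prod_right' (f := fun z => ‖F z - ∫ b, F (z.1, b) ∂ν‖ₑ ^ 2)
    ((hF.sub (hmean.comp measurable_fst)).enorm.pow_const 2)

section TwoFactors

variable {μ : Measure α} {ν : Measure β} {F : α × β → ℝ}

lemma ae_memLp_two_prodMk_left [SFinite μ] [SFinite ν] (hF : Measurable F)
    (hF2 : MemLp F 2 (μ.prod ν)) :
    ∀ᵐ a ∂μ, MemLp (fun b => F (a, b)) 2 ν := by
  filter_upwards [hF2.integrable_sq.prod_right_ae] with a ha
  exact (memLp_two_iff_integrable_sq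
    (hF.comp measurable_prodMk_left).aestronglyMeasurable).2 ha

lemma ae_memLp_two_prodMk_right [SFinite μ] [SFinite ν] (hF : Measurable F)
    (hF2 : MemLp F 2 (μ.prod ν)) :
    ∀ᵐ b ∂ν, MemLp (fun a => F (a, b)) 2 μ := by
  filter_upwards [hF2.integrable_sq.prod_left_ae] with b hb
  exact (memLp_two_iff_integrable_sq
    (hF.comp measurable_prodMk_right).aestronglyMeasurable).2 hb

lemma lintegral_enorm_sub_integral_sq_prod [SFinite ν] (hF : Measurable F) :
    ∫⁻ z, ‖F z - ∫ b, F (z.1, b) ∂ν‖ₑ ^ 2 ∂(μ.prod ν) = ∫⁻ a, eVar[fun b => F (a, b); ν] ∂μ := by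
  have hmean : Measurable fun a => ∫ b, F (a, b) ∂ν :=
    hF.stronglyMeasurable.integral_prod_right'.measurable
  exact lintegral_prod _ ((hF.sub (hmean.comp measurable_fst)).enorm.pow_const 2).aemeasurable

-- The fluctuation of `b ↦ ∫ F(a, b) dμ(a)` is the `μ`-average of `F(a, b) - ∫ F(a, b') dν(b')`,
-- so Jensen's inequality bounds it by the second term.
lemma evariance_prod_le [IsProbabilityMeasure μ] [IsProbabilityMeasure ν] (hF : Measurable F)
    (hF2 : MemLp F 2 (μ.prod ν)) :
    eVar[F; μ.prod ν] ≤
      ∫⁻ b, eVar[fun a => F (a, b); μ] ∂ν + ∫⁻ a, eVar[fun b => F (a, b); ν] ∂μ := by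
  set m := ∫ z, F z ∂(μ.prod ν)
  set B : α → ℝ := fun a => ∫ b, F (a, b) ∂ν
  have hBm : Measurable B := hF.stronglyMeasurable.integral_prod_right'.measurable
  have hint : Integrable F (μ.prod ν) := hF2.integrable one_le_two
  have hslice : ∀ᵐ b ∂ν, ∫⁻ a, ‖F (a, b) - m‖ₑ ^ 2 ∂μ ≤
      eVar[fun a => F (a, b); μ] + ∫⁻ a, ‖F (a, b) - B a‖ₑ ^ 2 ∂μ := by
    filter_upwards [ae_memLp_two_prodMk_right hF hF2] with b hb
    have hmean : ∫ a, F (a, b) ∂μ - m = ∫ a, (F (a, b) - B a) ∂μ := by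
      rw [integral_sub (hb.integrable one_le_two) hint.integral_prod_left,
        ← integral_prod F hint]
    rw [lintegral_enorm_sub_const_sq hb, hmean]
    gcongr
    exact enorm_integral_sq_le_lintegral (hb.1.sub hBm.aestronglyMeasurable)
  calc eVar[F; μ.prod ν]
      = ∫⁻ b, ∫⁻ a, ‖F (a, b) - m‖ₑ ^ 2 ∂μ ∂ν := lintegral_prod_symm' _ (by fun_prop)
    _ ≤ ∫⁻ b, (eVar[fun a => F (a, b); μ] + ∫⁻ a, ‖F (a, b) - B a‖ₑ ^ 2 ∂μ) ∂ν :=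
        lintegral_mono_ae hslice
    _ = ∫⁻ b, eVar[fun a => F (a, b); μ] ∂ν + ∫⁻ b, ∫⁻ a, ‖F (a, b) - B a‖ₑ ^ 2 ∂μ ∂ν :=
        lintegral_add_left
          (measurable_evariance_prodMk_left (F := fun z : β × α => F z.swap) (by fun_prop)) _
    _ = _ := by
        rw [← lintegral_prod_symm' (fun z => ‖F z - B z.1‖ₑ ^ 2) (by fun_prop),
          lintegral_enorm_sub_integral_sq_prod hF]

end TwoFactors

section FinitelyManyFactors

lemma evariance_comp_of_measurePreserving {μ : Measure α} {ν : Measure β} {φ : α → β}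
    (hφ : MeasurePreserving φ μ ν) {X : β → ℝ} (hX : Measurable X) :
    eVar[X ∘ φ; μ] = eVar[X; ν] := by
  have hmean : μ[X ∘ φ] = ν[X] := by
    rw [← hφ.map_eq, integral_map hφ.aemeasurable hX.aestronglyMeasurable]
    rfl
  rw [evariance, hmean]
  exact hφ.lintegral_comp (f := fun b => ‖X b - ν[X]‖ₑ ^ 2) (by fun_prop)

variable {n : ℕ}

lemma measurePreserving_finCons {X : Fin (n + 1) → Type*} [∀ i, MeasurableSpace (X i)]
    (μ : ∀ i, Measure (X i)) [∀ i, SigmaFinite (μ i)] :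
    MeasurePreserving (fun z : X 0 × (∀ i : Fin n, X i.succ) => (Fin.cons z.1 z.2 : ∀ i, X i))
      ((μ 0).prod (Measure.pi fun i => μ i.succ)) (Measure.pi μ) := by
  have hcons : (fun z : X 0 × (∀ i : Fin n, X i.succ) => (Fin.cons z.1 z.2 : ∀ i, X i)) =
      (MeasurableEquiv.piFinSuccAbove X 0).symm :=
    funext fun z => (Fin.insertNth_zero z.1 z.2).symm
  rw [hcons]
  exact (measurePreserving_piFinSuccAbove μ 0).symm

lemma lintegral_pi_succ {X : Fin (n + 1) → Type*} [∀ i, MeasurableSpace (X i)]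
    (μ : ∀ i, Measure (X i)) [∀ i, SigmaFinite (μ i)] {f : (∀ i, X i) → ℝ≥0∞}
    (hf : Measurable f) :
    ∫⁻ x, f x ∂(Measure.pi μ) =
      ∫⁻ t, ∫⁻ y, f (Fin.cons t y) ∂(Measure.pi fun i => μ i.succ) ∂(μ 0) := by
  rw [← (measurePreserving_finCons μ).lintegral_comp hf]
  exact lintegral_prod _ (hf.comp (measurePreserving_finCons μ).measurable).aemeasurable

theorem evariance_pi_le {X : Fin n → Type*} [∀ i, MeasurableSpace (X i)]
    (μ : ∀ i, Measure (X i)) [∀ i, IsProbabilityMeasure (μ i)] {F : (∀ i, X i) → ℝ}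
    (hF : Measurable F) (hF2 : MemLp F 2 (Measure.pi μ)) :
    eVar[F; Measure.pi μ] ≤
      ∑ i, ∫⁻ x, eVar[fun t => F (Function.update x i t); μ i] ∂(Measure.pi μ) := by
  induction n with
  | zero =>
    have hconst : F = fun _ => F default := funext fun x => by rw [Subsingleton.elim x default]
    rw [hconst]
    simp [evariance]
  | succ n ih =>
    set φ := fun z : X 0 × (∀ i : Fin n, X i.succ) => (Fin.cons z.1 z.2 : ∀ i, X i)
    have hφ := measurePreserving_finCons μ
    have hG : Measurable (F ∘ φ) := hF.comp hφ.measurable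
    have hG2 := hF2.comp_measurePreserving hφ
    have hslice (i : Fin (n + 1)) :
        Measurable fun x => eVar[fun t => F (Function.update x i t); μ i] :=
      measurable_evariance_prodMk_left (F := fun z => F (Function.update z.1 i z.2))
        (hF.comp measurable_update')
    rw [← evariance_comp_of_measurePreserving hφ hF, Fin.sum_univ_succ]
    simp only [lintegral_pi_succ μ (hslice _)]
    refine (evariance_prod_le hG hG2).trans (add_le_add (le_of_eq ?_) ?_)
    · simp [φ, Fin.update_cons_zero]
    · rw [← lintegral_finsetSum _ fun i _ =>
        ((hslice i.succ).comp hφ.measurable).lintegral_prod_right']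
      refine lintegral_mono_ae ?_
      filter_upwards [ae_memLp_two_prodMk_left hG hG2] with t ht
      simpa only [φ, Function.comp_def, Fin.cons_update] using
        ih (fun i => μ i.succ) (hG.comp measurable_prodMk_left) ht

end FinitelyManyFactors

end EfronStein

section ProductMeasures

lemma lintegral_lintegral_update {ι : Type*} [Fintype ι] [DecidableEq ι] {X : ι → Type*}
    [∀ i, MeasurableSpace (X i)] (μ : ∀ i, Measure (X i)) [∀ i, IsProbabilityMeasure (μ i)]
    {f : (∀ i, X i) → ℝ≥0∞} (hf : Measurable f) (i : ι) :
    ∫⁻ x, ∫⁻ t, f (Function.update x i t) ∂(μ i) ∂(Measure.pi μ) = ∫⁻ x, f x ∂(Measure.pi μ) := by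
  simp only [← lmarginal_singleton]
  refine lintegral_eq_of_lmarginal_eq {i} (hf.lmarginal μ) hf (funext fun x => ?_)
  rw [lmarginal_singleton]
  simp [lmarginal_update_of_mem]

variable {n : ℕ} {X : Fin n → Type*} [∀ i, MeasurableSpace (X i)] (μ : ∀ i, Measure (X i))
  [∀ i, SigmaFinite (μ i)] {f : ∀ i, X i → ℝ≥0∞}

lemma lintegral_pi_prod (hf : ∀ i, Measurable (f i)) :
    ∫⁻ x, ∏ i, f i (x i) ∂(Measure.pi μ) = ∏ i, ∫⁻ t, f i t ∂(μ i) := by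
  induction n with
  | zero => simp
  | succ n ih =>
    rw [lintegral_pi_succ μ (by fun_prop), Fin.prod_univ_succ]
    simp only [Fin.prod_univ_succ, Fin.cons_zero, Fin.cons_succ]
    rw [lintegral_lintegral_mul (hf 0).aemeasurable (Measurable.aemeasurable (by fun_prop)),
      ih _ fun i => hf i.succ]

lemma pi_withDensity [∀ i, SigmaFinite ((μ i).withDensity (f i))] (hf : ∀ i, Measurable (f i)) :
    Measure.pi (fun i => (μ i).withDensity (f i)) =
      (Measure.pi μ).withDensity fun x => ∏ i, f i (x i) := by
  refine Measure.pi_eq fun s hs => ?_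
  have hind (x : ∀ i, X i) : (univ.pi s).indicator (fun x => ∏ i, f i (x i)) x =
      ∏ i, (s i).indicator (f i) (x i) := by
    by_cases hx : x ∈ univ.pi s
    · rw [indicator_of_mem hx]
      exact Finset.prod_congr rfl fun i _ => (indicator_of_mem (hx i trivial) _).symm
    · obtain ⟨i, hi⟩ : ∃ i, x i ∉ s i := by simpa using hx
      rw [indicator_of_notMem hx,
        Finset.prod_eq_zero (Finset.mem_univ i) (indicator_of_notMem hi _)]
  rw [withDensity_apply _ (MeasurableSet.univ_pi hs), ← lintegral_indicator (.univ_pi hs)]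
  simp only [hind]
  rw [lintegral_pi_prod μ fun i => (hf i).indicator (hs i)]
  simp only [lintegral_indicator (hs _), withDensity_apply _ (hs _)]

end ProductMeasures

section LaplaceOneDim

lemma intervalIntegrable_deriv_sq_mul_exp_neg {f : ℝ → ℝ} {K : NNReal} (hf : LipschitzWith K f)
    (a b : ℝ) : IntervalIntegrable (fun x => deriv f x ^ 2 * Real.exp (-x)) volume a b := by
  have hsq : IntervalIntegrable (fun x => deriv f x ^ 2) volume a b :=
    (intervalIntegrable_const (c := (K : ℝ) ^ 2)).mono_fun
      ((measurable_deriv f).pow_const 2).aestronglyMeasurable (ae_of_all _ fun x => by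
        simpa using pow_le_pow_left₀ (norm_nonneg _) (norm_deriv_le_of_lipschitz hf) 2)
  exact hsq.mul_continuousOn (by fun_prop)

-- Integrating `((f - f 0)² e⁻ˣ)' = 2 (f - f 0) f' e⁻ˣ - (f - f 0)² e⁻ˣ` leaves a nonnegative
-- boundary term, and `2uv ≤ u² / 2 + 2v²` absorbs half of the second summand.
lemma intervalIntegral_sub_zero_sq_mul_exp_neg_le {f : ℝ → ℝ} {K : NNReal} (hf : LipschitzWith K f)
    {T : ℝ} (hT : 0 ≤ T) :
    ∫ x in 0..T, (f x - f 0) ^ 2 * Real.exp (-x) ≤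
      4 * ∫ x in 0..T, deriv f x ^ 2 * Real.exp (-x) := by
  set u : ℝ → ℝ := fun x => f x - f 0
  have hu : LipschitzWith K u := by simpa using hf.sub (LipschitzWith.const (f 0))
  have hacu : AbsolutelyContinuousOnInterval u 0 T :=
    hu.lipschitzOnWith.absolutelyContinuousOnInterval
  have hacexp : AbsolutelyContinuousOnInterval (fun x => Real.exp (-x)) 0 T :=
    ContDiffOn.absolutelyContinuousOnInterval (by fun_prop)
  have hac := (hacu.mul hacu).mul hacexp
  have hint_u : IntervalIntegrable (fun x => u x ^ 2 * Real.exp (-x)) volume 0 T :=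
    Continuous.intervalIntegrable (by have := hu.continuous; fun_prop) _ _
  have hint_deriv := intervalIntegrable_deriv_sq_mul_exp_neg hf 0 T
  have hboundary : 0 ≤ ∫ x in 0..T, deriv (u * u * fun x => Real.exp (-x)) x := by
    rw [hac.integral_deriv_eq_sub]
    simpa [u] using mul_nonneg (mul_self_nonneg (f T - f 0)) (Real.exp_pos (-T)).le
  have hderiv : ∫ x in 0..T, deriv (u * u * fun x => Real.exp (-x)) x ≤
      ∫ x in 0..T, (2 * (deriv f x ^ 2 * Real.exp (-x)) - 2⁻¹ * (u x ^ 2 * Real.exp (-x))) := by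
    refine intervalIntegral.integral_mono_ae hT hac.intervalIntegrable_deriv
      ((hint_deriv.const_mul 2).sub (hint_u.const_mul 2⁻¹)) ?_
    filter_upwards [hf.ae_differentiableAt_real] with x hx
    have hdu : HasDerivAt u (deriv f x) x := hx.hasDerivAt.sub_const _
    have hdexp : HasDerivAt (fun x => Real.exp (-x)) (-Real.exp (-x)) x := by
      simpa using (hasDerivAt_neg x).exp
    rw [((hdu.mul hdu).mul hdexp).deriv]
    simp only [Pi.mul_apply]
    nlinarith [mul_nonneg (Real.exp_pos (-x)).le (sq_nonneg (2 * deriv f x - u x))]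
  rw [intervalIntegral.integral_sub (hint_deriv.const_mul 2) (hint_u.const_mul 2⁻¹),
    intervalIntegral.integral_const_mul, intervalIntegral.integral_const_mul] at hderiv
  linarith

lemma enorm_sq_mul_ofReal_exp_neg (a x : ℝ) :
    ‖a‖ₑ ^ 2 * ENNReal.ofReal (Real.exp (-x)) = ENNReal.ofReal (a ^ 2 * Real.exp (-x)) := by
  rw [ENNReal.ofReal_mul (sq_nonneg a), enorm_sq_eq_ofReal_sq]

lemma setLIntegral_Ioi_enorm_sub_zero_sq_mul_exp_neg_le {f : ℝ → ℝ} {K : NNReal}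
    (hf : LipschitzWith K f) :
    ∫⁻ x in Ioi 0, ‖f x - f 0‖ₑ ^ 2 * ENNReal.ofReal (Real.exp (-x)) ≤
      4 * ∫⁻ x in Ioi 0, ‖deriv f x‖ₑ ^ 2 * ENNReal.ofReal (Real.exp (-x)) := by
  have hfc := hf.continuous
  simp only [enorm_sq_mul_ofReal_exp_neg]
  refine le_of_tendsto ((aecover_Iic Filter.tendsto_id).lintegral_tendsto_of_countably_generated
    (Measurable.aemeasurable (by fun_prop))) (Filter.eventually_ge_atTop 0 |>.mono fun T hT => ?_)
  have hint_u : IntervalIntegrable (fun x => (f x - f 0) ^ 2 * Real.exp (-x)) volume 0 T :=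
    Continuous.intervalIntegrable (by fun_prop) _ _
  have hint_deriv := intervalIntegrable_deriv_sq_mul_exp_neg hf 0 T
  rw [Measure.restrict_restrict measurableSet_Iic, inter_comm, id_eq, Ioi_inter_Iic]
  calc ∫⁻ x in Ioc 0 T, ENNReal.ofReal ((f x - f 0) ^ 2 * Real.exp (-x))
      = ENNReal.ofReal (∫ x in 0..T, (f x - f 0) ^ 2 * Real.exp (-x)) := by
        rw [intervalIntegral.integral_of_le hT, ofReal_integral_eq_lintegral_ofReal hint_u.1
          (ae_of_all _ fun x => by positivity)]
    _ ≤ ENNReal.ofReal (4 * ∫ x in 0..T, deriv f x ^ 2 * Real.exp (-x)) :=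
        ENNReal.ofReal_le_ofReal (intervalIntegral_sub_zero_sq_mul_exp_neg_le hf hT)
    _ = 4 * ∫⁻ x in Ioc 0 T, ENNReal.ofReal (deriv f x ^ 2 * Real.exp (-x)) := by
        rw [intervalIntegral.integral_of_le hT, ENNReal.ofReal_mul zero_le_four,
          ofReal_integral_eq_lintegral_ofReal hint_deriv.1 (ae_of_all _ fun x => by positivity),
          ENNReal.ofReal_ofNat]
    _ ≤ 4 * ∫⁻ x in Ioi 0, ENNReal.ofReal (deriv f x ^ 2 * Real.exp (-x)) := by
        gcongr
        exact Ioc_subset_Ioi_self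

lemma setLIntegral_Ioi_pow_mul_exp_neg (k : ℕ) :
    ∫⁻ x in Ioi 0, ENNReal.ofReal (x ^ k * Real.exp (-x)) = (k.factorial : ℝ≥0∞) := by
  have hint : IntegrableOn (fun x : ℝ => x ^ k * Real.exp (-x)) (Ioi 0) := by
    simpa [mul_comm] using Real.GammaIntegral_convergent (s := k + 1) (by positivity)
  rw [← ofReal_integral_eq_lintegral_ofReal hint ((ae_restrict_mem measurableSet_Ioi).mono
    fun x (hx : 0 < x) => by positivity), ← ENNReal.ofReal_natCast, ← Real.Gamma_nat_eq_factorial,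
    Real.Gamma_eq_integral (by positivity)]
  simp [mul_comm]

/-- The standard Laplace distribution on the line, of density `exp (-|x|) / 2`. -/
noncomputable def laplaceMeasure : Measure ℝ :=
  volume.withDensity fun x => ENNReal.ofReal (Real.exp (-|x|) / 2)

lemma lintegral_eq_setLIntegral_Ioi_add_neg (g : ℝ → ℝ≥0∞) :
    ∫⁻ x, g x = (∫⁻ x in Ioi 0, g x) + ∫⁻ x in Ioi 0, g (-x) := by
  have hneg : ∫⁻ x in Iio 0, g x = ∫⁻ x in Ioi 0, g (-x) := by
    simpa using ((Measure.measurePreserving_neg (volume : Measure ℝ)).setLIntegral_comp_preimage_emb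
      (MeasurableEquiv.neg ℝ).measurableEmbedding g (Iio 0)).symm
  rw [← lintegral_add_compl g measurableSet_Ioi (A := Ioi 0), compl_Ioi,
    setLIntegral_congr Iio_ae_eq_Iic.symm, hneg]

lemma lintegral_laplaceMeasure {g : ℝ → ℝ≥0∞} (hg : Measurable g) :
    ∫⁻ x, g x ∂laplaceMeasure =
      2⁻¹ * ((∫⁻ x in Ioi 0, g x * ENNReal.ofReal (Real.exp (-x))) +
        ∫⁻ x in Ioi 0, g (-x) * ENNReal.ofReal (Real.exp (-x))) := by
  have hpos (h : ℝ → ℝ≥0∞) : ∫⁻ x in Ioi 0, ENNReal.ofReal (Real.exp (-|x|) / 2) * h x =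
      2⁻¹ * ∫⁻ x in Ioi 0, h x * ENNReal.ofReal (Real.exp (-x)) := by
    rw [← lintegral_const_mul' _ _ (by simp)]
    refine setLIntegral_congr_fun measurableSet_Ioi fun x (hx : 0 < x) => ?_
    rw [abs_of_pos hx, div_eq_inv_mul, ENNReal.ofReal_mul (by positivity),
      ENNReal.ofReal_inv_of_pos two_pos, ENNReal.ofReal_ofNat]
    ring
  rw [laplaceMeasure, lintegral_withDensity_eq_lintegral_mul _ (by fun_prop) hg,
    lintegral_eq_setLIntegral_Ioi_add_neg, mul_add]
  simp only [Pi.mul_apply, abs_neg, hpos]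

instance : IsProbabilityMeasure laplaceMeasure := by
  have hmass := setLIntegral_Ioi_pow_mul_exp_neg 0
  simp only [pow_zero, one_mul, Nat.factorial_zero, Nat.cast_one] at hmass
  constructor
  rw [← lintegral_one, lintegral_laplaceMeasure measurable_const]
  simp only [one_mul, hmass, one_add_one_eq_two]
  exact ENNReal.inv_mul_cancel two_ne_zero ENNReal.ofNat_ne_top

lemma lintegral_enorm_sq_laplaceMeasure : ∫⁻ x, ‖x‖ₑ ^ 2 ∂laplaceMeasure = 2 := by
  rw [lintegral_laplaceMeasure (by fun_prop)]
  simp only [enorm_neg, enorm_sq_mul_ofReal_exp_neg, setLIntegral_Ioi_pow_mul_exp_neg]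
  rw [← two_mul, ← mul_assoc, ENNReal.inv_mul_cancel two_ne_zero ENNReal.ofNat_ne_top]
  norm_num

lemma memLp_id_laplaceMeasure : MemLp id 2 laplaceMeasure :=
  memLp_two_of_lintegral_enorm_sq_ne_top measurable_id.aestronglyMeasurable
    (by simp [lintegral_enorm_sq_laplaceMeasure])

lemma evariance_laplaceMeasure_le {f : ℝ → ℝ} {K : NNReal} (hf : LipschitzWith K f) :
    eVar[f; laplaceMeasure] ≤ 4 * ∫⁻ x, ‖deriv f x‖ₑ ^ 2 ∂laplaceMeasure := by
  have hfm := hf.continuous.measurable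
  have hneg : LipschitzWith K fun x => f (-x) := by
    simpa [Function.comp_def] using hf.comp (LipschitzWith.id (α := ℝ)).neg
  have hright := setLIntegral_Ioi_enorm_sub_zero_sq_mul_exp_neg_le hf
  have hleft := setLIntegral_Ioi_enorm_sub_zero_sq_mul_exp_neg_le hneg
  simp only [deriv_comp_neg, neg_zero, enorm_neg] at hleft
  calc eVar[f; laplaceMeasure]
      ≤ ∫⁻ x, ‖f x - f 0‖ₑ ^ 2 ∂laplaceMeasure :=
        evariance_le_lintegral_enorm_sub_const_sq
          (memLp_of_lipschitzWith memLp_id_laplaceMeasure hf) _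
    _ ≤ 2⁻¹ * (4 * (∫⁻ x in Ioi 0, ‖deriv f x‖ₑ ^ 2 * ENNReal.ofReal (Real.exp (-x))) +
          4 * ∫⁻ x in Ioi 0, ‖deriv f (-x)‖ₑ ^ 2 * ENNReal.ofReal (Real.exp (-x))) := by
        rw [lintegral_laplaceMeasure (by fun_prop)]
        gcongr
    _ = 4 * ∫⁻ x, ‖deriv f x‖ₑ ^ 2 ∂laplaceMeasure := by
        rw [lintegral_laplaceMeasure ((measurable_deriv f).enorm.pow_const 2)]
        ring

end LaplaceOneDim

section LaplaceVector

variable {d : ℕ}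

/-- The sum of the absolute values of the coordinates, so that `l1Sphere d` is its unit sphere.
The ambient type carries the Euclidean norm, for which Lipschitz constants are taken. -/
def l1Norm (w : EuclideanSpace ℝ (Fin d)) : ℝ := ∑ i, |w i|

/-- The law of a vector with independent standard Laplace coordinates. -/
noncomputable def stdLaplace (d : ℕ) : Measure (EuclideanSpace ℝ (Fin d)) :=
  (Measure.pi fun _ => laplaceMeasure).map (WithLp.toLp 2)

lemma measurePreserving_toLp_stdLaplace :
    MeasurePreserving (WithLp.toLp 2) (Measure.pi fun _ : Fin d => laplaceMeasure) (stdLaplace d) :=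
  (WithLp.measurable_toLp 2 _).measurePreserving _

instance : IsProbabilityMeasure (stdLaplace d) :=
  Measure.isProbabilityMeasure_map (WithLp.measurable_toLp 2 _).aemeasurable

@[fun_prop]
lemma continuous_l1Norm : Continuous (l1Norm (d := d)) := by
  unfold l1Norm
  fun_prop

lemma lintegral_stdLaplace {g : EuclideanSpace ℝ (Fin d) → ℝ≥0∞} (hg : Measurable g) :
    ∫⁻ w, g w ∂(stdLaplace d) =
      2⁻¹ ^ d * ∫⁻ w, g w * ENNReal.ofReal (Real.exp (-l1Norm w)) := by
  have hdensity (x : Fin d → ℝ) : ∏ i, ENNReal.ofReal (Real.exp (-|x i|) / 2) =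
      2⁻¹ ^ d * ENNReal.ofReal (Real.exp (-l1Norm (WithLp.toLp 2 x))) := by
    simp_rw [l1Norm, ← Finset.sum_neg_distrib, Real.exp_sum, div_eq_mul_inv]
    rw [← ENNReal.ofReal_prod_of_nonneg fun i _ => by positivity, Finset.prod_mul_distrib,
      ENNReal.ofReal_mul (by positivity), mul_comm]
    simp [ENNReal.ofReal_pow, ENNReal.ofReal_inv_of_pos, ENNReal.inv_pow]
  have : IsProbabilityMeasure
      (volume.withDensity fun x : ℝ => ENNReal.ofReal (Real.exp (-|x|) / 2)) :=
    inferInstanceAs (IsProbabilityMeasure laplaceMeasure)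
  rw [← measurePreserving_toLp_stdLaplace.lintegral_comp hg,
    ← (PiLp.volume_preserving_toLp (Fin d)).lintegral_comp (by fun_prop),
    ← lintegral_const_mul' _ _ (by simp)]
  unfold laplaceMeasure
  rw [pi_withDensity _ fun _ => by fun_prop,
    lintegral_withDensity_eq_lintegral_mul _ (by fun_prop) (by fun_prop)]
  refine lintegral_congr fun x => ?_
  rw [Pi.mul_apply, hdensity]
  ring

lemma stdLaplace_absolutelyContinuous : stdLaplace d ≪ volume := by
  refine Measure.AbsolutelyContinuous.mk fun s hs h0 => ?_
  rw [← lintegral_indicator_one hs, lintegral_stdLaplace (measurable_one.indicator hs)]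
  have hae : (fun w => s.indicator 1 w * ENNReal.ofReal (Real.exp (-l1Norm w))) =ᵐ[volume] 0 := by
    filter_upwards [measure_eq_zero_iff_ae_notMem.1 h0] with w hw
    simp [hw]
  simp [lintegral_congr_ae hae]

lemma lintegral_enorm_sq_stdLaplace : ∫⁻ w, ‖w‖ₑ ^ 2 ∂(stdLaplace d) = 2 * d := by
  have hcoord (i : Fin d) : ∫⁻ w, ‖w i‖ₑ ^ 2 ∂(stdLaplace d) = 2 := by
    rw [← measurePreserving_toLp_stdLaplace.lintegral_comp (by fun_prop),
      ← lintegral_enorm_sq_laplaceMeasure]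
    exact (measurePreserving_eval (fun _ : Fin d => laplaceMeasure) i).lintegral_comp
      (f := fun t => ‖t‖ₑ ^ 2) (by fun_prop)
  have hnorm (w : EuclideanSpace ℝ (Fin d)) : ‖w‖ₑ ^ 2 = ∑ i, ‖w i‖ₑ ^ 2 := by
    simp only [← ofReal_norm, ← ENNReal.ofReal_pow (norm_nonneg _), EuclideanSpace.norm_sq_eq]
    exact ENNReal.ofReal_sum_of_nonneg fun i _ => by positivity
  simp only [hnorm]
  rw [lintegral_finsetSum _ fun i _ => by fun_prop]
  simp [hcoord, mul_comm]

lemma memLp_id_stdLaplace : MemLp id 2 (stdLaplace d) :=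
  memLp_two_of_lintegral_enorm_sq_ne_top measurable_id.aestronglyMeasurable
    (by simp [lintegral_enorm_sq_stdLaplace, ENNReal.mul_ne_top])

lemma sum_enorm_lineDeriv_sq_le {ι E : Type*} [Fintype ι] [NormedAddCommGroup E]
    [InnerProductSpace ℝ E] (b : OrthonormalBasis ι ℝ E) {h : E → ℝ} {K : NNReal}
    (hh : LipschitzWith K h) {x : E} (hx : DifferentiableAt ℝ h x) :
    ∑ i, ‖lineDeriv ℝ h x (b i)‖ₑ ^ 2 ≤ (K : ℝ≥0∞) ^ 2 := by
  have hfderiv : ‖fderiv ℝ h x‖ₑ ≤ K :=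
    enorm_le_coe.2 (norm_fderiv_le_of_lipschitz ℝ hh)
  calc ∑ i, ‖lineDeriv ℝ h x (b i)‖ₑ ^ 2
      = ENNReal.ofReal (∑ i, fderiv ℝ h x (b i) ^ 2) := by
        rw [ENNReal.ofReal_sum_of_nonneg fun i _ => sq_nonneg _]
        refine Finset.sum_congr rfl fun i _ => ?_
        rw [hx.lineDeriv_eq_fderiv, enorm_sq_eq_ofReal_sq]
    _ = ‖fderiv ℝ h x‖ₑ ^ 2 := by
        rw [← b.norm_dual, ENNReal.ofReal_pow (norm_nonneg _), ofReal_norm]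
    _ ≤ (K : ℝ≥0∞) ^ 2 := by gcongr

lemma deriv_comp_toLp_update (h : EuclideanSpace ℝ (Fin d) → ℝ) (x : Fin d → ℝ) (i : Fin d)
    (t : ℝ) :
    deriv (fun s => h (WithLp.toLp 2 (Function.update x i s))) t =
      lineDeriv ℝ h (WithLp.toLp 2 (Function.update x i t)) (EuclideanSpace.single i 1) := by
  have hline (s : ℝ) : WithLp.toLp 2 (Function.update x i t) + s • EuclideanSpace.single i (1 : ℝ) =
      WithLp.toLp 2 (Function.update x i (t + s)) := by
    ext j
    obtain rfl | hj := eq_or_ne j i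
    · simp
    · simp [hj]
  have hshift := deriv_comp_const_add (fun s => h (WithLp.toLp 2 (Function.update x i s))) t 0
  rw [add_zero] at hshift
  simp only [lineDeriv, hline, hshift]

lemma lipschitzWith_toLp_update (x : Fin d → ℝ) (i : Fin d) :
    LipschitzWith 1 fun t => WithLp.toLp 2 (Function.update x i t) := by
  refine LipschitzWith.of_dist_le_mul fun s t => ?_
  have hsub : WithLp.toLp 2 (Function.update x i s) - WithLp.toLp 2 (Function.update x i t) =
      EuclideanSpace.single i (s - t) := by
    ext j
    obtain rfl | hj := eq_or_ne j i
    · simp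
    · simp [hj]
  simp [dist_eq_norm, hsub]

theorem evariance_stdLaplace_le {h : EuclideanSpace ℝ (Fin d) → ℝ} {K : NNReal}
    (hh : LipschitzWith K h) : eVar[h; stdLaplace d] ≤ 4 * (K : ℝ≥0∞) ^ 2 := by
  set μ := Measure.pi fun _ : Fin d => laplaceMeasure
  set D : Fin d → EuclideanSpace ℝ (Fin d) → ℝ≥0∞ :=
    fun i w => ‖lineDeriv ℝ h w (EuclideanSpace.single i 1)‖ₑ ^ 2
  have hD (i : Fin d) : Measurable (D i) := (measurable_lineDeriv hh.continuous).enorm.pow_const 2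
  have hmp := measurePreserving_toLp_stdLaplace (d := d)
  have hhm : Measurable h := hh.continuous.measurable
  have hslice (x : Fin d → ℝ) (i : Fin d) :
      eVar[fun t => h (WithLp.toLp 2 (Function.update x i t)); laplaceMeasure] ≤
        4 * ∫⁻ t, D i (WithLp.toLp 2 (Function.update x i t)) ∂laplaceMeasure := by
    have hlip : LipschitzWith K fun t => h (WithLp.toLp 2 (Function.update x i t)) := by
      simpa [Function.comp_def] using hh.comp (lipschitzWith_toLp_update x i)
    simpa only [D, ← deriv_comp_toLp_update] using evariance_laplaceMeasure_le hlip
  have hgrad : ∀ᵐ w ∂(stdLaplace d), ∑ i, D i w ≤ (K : ℝ≥0∞) ^ 2 := by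
    filter_upwards [stdLaplace_absolutelyContinuous.ae_le hh.ae_differentiableAt] with w hw
    simpa using sum_enorm_lineDeriv_sq_le (EuclideanSpace.basisFun (Fin d) ℝ) hh hw
  calc eVar[h; stdLaplace d]
      = eVar[h ∘ WithLp.toLp 2; μ] := (evariance_comp_of_measurePreserving hmp hhm).symm
    _ ≤ ∑ i, ∫⁻ x, eVar[fun t => h (WithLp.toLp 2 (Function.update x i t)); laplaceMeasure] ∂μ :=
        evariance_pi_le _ (hhm.comp hmp.measurable)
          ((memLp_of_lipschitzWith memLp_id_stdLaplace hh).comp_measurePreserving hmp)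
    _ ≤ ∑ i, ∫⁻ x, 4 * ∫⁻ t, D i (WithLp.toLp 2 (Function.update x i t)) ∂laplaceMeasure ∂μ := by
        gcongr with i _ x
        exact hslice x i
    _ = 4 * ∑ i, ∫⁻ w, D i w ∂(stdLaplace d) := by
        rw [Finset.mul_sum]
        refine Finset.sum_congr rfl fun i _ => ?_
        rw [lintegral_const_mul' _ _ (by simp), ← hmp.lintegral_comp (hD i)]
        exact congrArg (4 * ·) (lintegral_lintegral_update _ ((hD i).comp hmp.measurable) i)
    _ = 4 * ∫⁻ w, ∑ i, D i w ∂(stdLaplace d) := by rw [lintegral_finsetSum _ fun i _ => hD i]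
    _ ≤ 4 * ∫⁻ _, (K : ℝ≥0∞) ^ 2 ∂(stdLaplace d) := by
        gcongr 4 * ?_
        exact lintegral_mono_ae hgrad
    _ = 4 * (K : ℝ≥0∞) ^ 2 := by simp

instance : (stdLaplace d).IsNegInvariant where
  neg_eq_self := by
    refine Measure.ext_of_lintegral _ fun g hg => ?_
    rw [Measure.neg, lintegral_map hg measurable_neg,
      lintegral_stdLaplace (g := fun w => g (-w)) (by fun_prop), lintegral_stdLaplace hg,
      ← lintegral_neg_eq_self (fun w => g w * ENNReal.ofReal (Real.exp (-l1Norm w)))]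
    simp [l1Norm]

lemma integral_eq_zero_of_odd {E : Type*} [AddGroup E] [MeasurableSpace E]
    [MeasurableNeg E] {μ : Measure E} [μ.IsNegInvariant] {h : E → ℝ} (hodd : Function.Odd h) :
    ∫ x, h x ∂μ = 0 := by
  have hneg := integral_neg_eq_self h μ
  simp only [hodd _, integral_neg] at hneg
  linarith

lemma lintegral_enorm_sq_stdLaplace_le_of_odd {h : EuclideanSpace ℝ (Fin d) → ℝ} {K : NNReal}
    (hh : LipschitzWith K h) (hodd : Function.Odd h) :
    ∫⁻ w, ‖h w‖ₑ ^ 2 ∂(stdLaplace d) ≤ 4 * (K : ℝ≥0∞) ^ 2 := by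
  simpa [evariance, integral_eq_zero_of_odd hodd] using evariance_stdLaplace_le hh

end LaplaceVector

section LinearSlicing

variable {V : Type*} [NormedAddCommGroup V] [NormedSpace ℝ V] [MeasurableSpace V]
  [BorelSpace V]

variable {ℓ : V →L[ℝ] ℝ} {u : V}

lemma setLIntegral_hausdorffMeasure_eq_lintegral_ker (hu : ℓ u = 1) {s : ℝ} (hs : 0 ≤ s)
    {Q : V → ℝ≥0∞} (hQ : Measurable Q) :
    ∫⁻ e in {e | ℓ e = 1}, Q e ∂μH[s] = ∫⁻ v : ℓ.ker, Q (u + v) ∂μH[s] := by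
  have hiso : Isometry fun v : ℓ.ker => u + (v : V) := Isometry.of_dist_eq fun v w => by
    simp [dist_eq_norm]
  have hrange : range (fun v : ℓ.ker => u + (v : V)) = {e | ℓ e = 1} := by
    ext e
    refine ⟨?_, fun he => ⟨⟨e - u, by simp_all⟩, by simp⟩⟩
    rintro ⟨v, rfl⟩
    simp [hu]
  rw [← hrange, ← hiso.map_hausdorffMeasure (.inl hs), lintegral_map hQ hiso.continuous.measurable]

variable [FiniteDimensional ℝ V]

lemma lintegral_comp_inv_smul (μ : Measure V) [μ.IsAddHaarMeasure] {f : V → ℝ≥0∞}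
    (hf : Measurable f) {t : ℝ} (ht : 0 < t) :
    ∫⁻ v, f (t⁻¹ • v) ∂μ = ENNReal.ofReal (t ^ Module.finrank ℝ V) * ∫⁻ v, f v ∂μ := by
  rw [← lintegral_map hf (measurable_const_smul t⁻¹),
    Measure.map_addHaar_smul μ (inv_ne_zero ht.ne'), lintegral_smul_measure, inv_pow, inv_inv,
    abs_of_pos (by positivity), smul_eq_mul]

lemma exists_lintegral_eq_mul_lintegral_ker (μ : Measure V) [μ.IsAddHaarMeasure] (hu : ℓ u = 1)
    (κ : Measure ℓ.ker) [κ.IsAddHaarMeasure] :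
    ∃ c : ℝ≥0∞, ∀ g : V → ℝ≥0∞, Measurable g →
      ∫⁻ w, g w ∂μ = c * ∫⁻ t : ℝ, ∫⁻ v : ℓ.ker, g (t • u + v) ∂κ := by
  let T := (ContinuousLinearEquiv.equivOfRightInverse ℓ (.toSpanSingleton ℝ u)
    fun t => by simp [hu]).symm
  have hT : Measurable T := T.continuous.measurable
  let ν := (volume.prod κ).map T
  have hν : ν.IsAddHaarMeasure := T.isAddHaarMeasure_map _
  refine ⟨μ.addHaarScalarFactor ν, fun g hg => ?_⟩
  calc ∫⁻ w, g w ∂μ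
      = μ.addHaarScalarFactor ν * ∫⁻ w, g w ∂ν := by
        conv_lhs => rw [Measure.isAddLeftInvariant_eq_smul μ ν, lintegral_smul_measure]
        rfl
    _ = μ.addHaarScalarFactor ν * ∫⁻ t : ℝ, ∫⁻ v : ℓ.ker, g (t • u + v) ∂κ := by
        rw [lintegral_map hg hT, lintegral_prod (fun z => g (T z)) (by fun_prop)]
        simp [T]

lemma lintegral_ker_indicator_pos (hu : ℓ u = 1) (κ : Measure ℓ.ker) [κ.IsAddHaarMeasure]
    {Q : V → ℝ≥0∞} (hQ : Measurable Q) (ρ : ℝ → ℝ≥0∞) (t : ℝ) :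
    ∫⁻ v : ℓ.ker, {w | 0 < ℓ w}.indicator (fun w => Q ((ℓ w)⁻¹ • w) * ρ (ℓ w)) (t • u + v) ∂κ =
      (Ioi 0).indicator (fun t => ENNReal.ofReal (t ^ Module.finrank ℝ ℓ.ker) * ρ t *
        ∫⁻ v : ℓ.ker, Q (u + v) ∂κ) t := by
  have hℓt (v : ℓ.ker) : ℓ (t • u + v) = t := by simp [hu]
  by_cases ht : 0 < t
  · have hscale (v : ℓ.ker) : t⁻¹ • (t • u + (v : V)) = u + (t⁻¹ • v : ℓ.ker) := by
      simp [smul_smul, ht.ne']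
    simp only [indicator, mem_ofPred_eq, mem_Ioi, hℓt, ht, if_true, hscale]
    rw [lintegral_mul_const _ (by fun_prop),
      lintegral_comp_inv_smul κ (f := fun v : ℓ.ker => Q (u + v)) (by fun_prop) ht]
    ring
  · simp [hu, ht]

theorem exists_setLIntegral_pos_eq_mul (μ : Measure V) [μ.IsAddHaarMeasure] (hℓ : ℓ ≠ 0) :
    ∃ c : ℝ≥0∞, ∀ (Q : V → ℝ≥0∞) (ρ : ℝ → ℝ≥0∞), Measurable Q → Measurable ρ →
      ∫⁻ w in {w | 0 < ℓ w}, Q ((ℓ w)⁻¹ • w) * ρ (ℓ w) ∂μ =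
        c * (∫⁻ t in Ioi 0, ENNReal.ofReal (t ^ (Module.finrank ℝ V - 1)) * ρ t) *
          ∫⁻ e in {e | ℓ e = 1}, Q e ∂μH[(Module.finrank ℝ V : ℝ) - 1] := by
  have hℓ' : (ℓ : V →ₗ[ℝ] ℝ) ≠ 0 := ContinuousLinearMap.coe_injective.ne hℓ
  obtain ⟨u, hu⟩ : ∃ u, ℓ u = 1 := LinearMap.surjective hℓ' 1
  have hker : Module.finrank ℝ ℓ.ker + 1 = Module.finrank ℝ V :=
    Module.Dual.finrank_ker_add_one_of_ne_zero hℓ'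
  obtain ⟨c, hc⟩ := exists_lintegral_eq_mul_lintegral_ker μ hu μH[Module.finrank ℝ ℓ.ker]
  refine ⟨c, fun Q ρ hQ hρ => ?_⟩
  have hpos : MeasurableSet {w | 0 < ℓ w} := measurableSet_lt measurable_const ℓ.measurable
  rw [← lintegral_indicator hpos, hc _ (Measurable.indicator (by fun_prop) hpos)]
  simp only [lintegral_ker_indicator_pos hu _ hQ]
  rw [lintegral_indicator measurableSet_Ioi, lintegral_mul_const _ (by fun_prop),
    ← setLIntegral_hausdorffMeasure_eq_lintegral_ker hu (Nat.cast_nonneg _) hQ, ← hker]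
  simp [mul_assoc]

end LinearSlicing

section Polar

variable {d : ℕ}

/-- The linear functional that agrees with `l1Norm` on the nonnegative orthant. -/
noncomputable def coordSum (d : ℕ) : EuclideanSpace ℝ (Fin d) →L[ℝ] ℝ :=
  ∑ i, EuclideanSpace.proj i

@[simp]
lemma coordSum_apply (w : EuclideanSpace ℝ (Fin d)) : coordSum d w = ∑ i, w i := by
  simp [coordSum]

/-- The isometry that changes the signs of the coordinates in `s`. -/
noncomputable def reflect (s : Finset (Fin d)) :
    EuclideanSpace ℝ (Fin d) ≃ₗᵢ[ℝ] EuclideanSpace ℝ (Fin d) :=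
  .piLpCongrRight 2 fun i => if i ∈ s then .neg ℝ else .refl ℝ ℝ

@[simp]
lemma reflect_apply (s : Finset (Fin d)) (w : EuclideanSpace ℝ (Fin d)) (i : Fin d) :
    reflect s w i = if i ∈ s then -w i else w i := by
  by_cases hi : i ∈ s <;> simp [reflect, hi]

/-- The nonnegative orthant with the faces normal to the coordinates in `s` removed. The images
`reflect s (nonnegCone s)` partition the whole space. -/
def nonnegCone (s : Finset (Fin d)) : Set (EuclideanSpace ℝ (Fin d)) :=
  {w | ∀ i, if i ∈ s then 0 < w i else 0 ≤ w i}

lemma measurableSet_nonnegCone (s : Finset (Fin d)) : MeasurableSet (nonnegCone s) := by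
  simp only [nonnegCone, ofPred_forall]
  refine MeasurableSet.iInter fun i => ?_
  split_ifs
  · exact measurableSet_lt measurable_const (by fun_prop)
  · exact measurableSet_le measurable_const (by fun_prop)

lemma smul_mem_nonnegCone_iff {s : Finset (Fin d)} {w : EuclideanSpace ℝ (Fin d)} {a : ℝ}
    (ha : 0 < a) : a • w ∈ nonnegCone s ↔ w ∈ nonnegCone s := by
  simp [nonnegCone, mul_pos_iff_of_pos_left ha, mul_nonneg_iff_of_pos_left ha]

lemma l1Norm_reflect (s : Finset (Fin d)) (w : EuclideanSpace ℝ (Fin d)) :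
    l1Norm (reflect s w) = l1Norm w := by
  refine Finset.sum_congr rfl fun i _ => ?_
  rw [reflect_apply]
  split_ifs <;> simp

lemma l1Norm_eq_coordSum {s : Finset (Fin d)} {w : EuclideanSpace ℝ (Fin d)}
    (hw : w ∈ nonnegCone s) : l1Norm w = coordSum d w := by
  rw [coordSum_apply]
  refine Finset.sum_congr rfl fun i _ => abs_of_nonneg ?_
  have hi := hw i
  split_ifs at hi
  exacts [hi.le, hi]

lemma reflect_mem_nonnegCone_iff {s : Finset (Fin d)} {w : EuclideanSpace ℝ (Fin d)} :
    reflect s w ∈ nonnegCone s ↔ s = Finset.univ.filter (w · < 0) := by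
  simp only [nonnegCone, mem_ofPred_eq, reflect_apply, Finset.ext_iff, Finset.mem_filter_univ]
  refine forall_congr' fun i => ?_
  split_ifs with hi <;> simp [hi]

lemma lintegral_eq_sum_nonnegCone {κ : Measure (EuclideanSpace ℝ (Fin d))}
    (hκ : ∀ s, MeasurePreserving (reflect s) κ κ) (g : EuclideanSpace ℝ (Fin d) → ℝ≥0∞) :
    ∫⁻ w, g w ∂κ = ∑ s, ∫⁻ w in nonnegCone s, g (reflect s w) ∂κ := by
  have hinvol (s : Finset (Fin d)) (w : EuclideanSpace ℝ (Fin d)) :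
      reflect s (reflect s w) = w := by
    ext i
    by_cases hi : i ∈ s <;> simp [hi]
  have hcover : ⋃ s, (reflect (d := d) s) ⁻¹' nonnegCone s = univ := by
    ext w
    simp [reflect_mem_nonnegCone_iff]
  have hdisj : Pairwise (Function.onFun Disjoint fun s : Finset (Fin d) =>
      reflect s ⁻¹' nonnegCone s) := by
    refine fun s t hst => Set.disjoint_left.2 fun w hs ht => hst ?_
    exact (reflect_mem_nonnegCone_iff.1 hs).trans (reflect_mem_nonnegCone_iff.1 ht).symm
  rw [← setLIntegral_univ, ← hcover, lintegral_iUnion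
    (fun s => (reflect s).continuous.measurable (measurableSet_nonnegCone s)) hdisj, tsum_fintype]
  refine Finset.sum_congr rfl fun s _ => ?_
  rw [← (hκ s).setLIntegral_comp_preimage_emb (reflect s).toHomeomorph.measurableEmbedding]
  simp only [preimage_preimage, hinvol, preimage_id']

lemma l1Norm_pos {w : EuclideanSpace ℝ (Fin d)} (hw : w ≠ 0) : 0 < l1Norm w := by
  obtain ⟨i, hi⟩ : ∃ i, w i ≠ 0 := by
    by_contra! h
    exact hw (by ext i; simp [h i])
  exact Finset.sum_pos' (fun i _ => abs_nonneg _) ⟨i, Finset.mem_univ i, abs_pos.2 hi⟩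

lemma setLIntegral_nonnegCone_radial [Nonempty (Fin d)] (s : Finset (Fin d))
    (Q : EuclideanSpace ℝ (Fin d) → ℝ≥0∞) (ρ : ℝ → ℝ≥0∞) :
    ∫⁻ w in nonnegCone s, Q ((coordSum d w)⁻¹ • w) * ρ (coordSum d w) =
      ∫⁻ w in {w | 0 < coordSum d w},
        (nonnegCone s).indicator Q ((coordSum d w)⁻¹ • w) * ρ (coordSum d w) := by
  rw [← lintegral_indicator (measurableSet_nonnegCone s), ← lintegral_indicator
    (measurableSet_lt measurable_const (coordSum d).measurable)]
  refine lintegral_congr_ae ?_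
  filter_upwards [Measure.ae_ne volume (0 : EuclideanSpace ℝ (Fin d))] with w hw
  by_cases hpos : 0 < coordSum d w
  · by_cases hcone : w ∈ nonnegCone s <;>
      simp only [indicator, mem_ofPred_eq, smul_mem_nonnegCone_iff (inv_pos.2 hpos), hcone, hpos,
        if_true, if_false, zero_mul]
  · have hcone : w ∉ nonnegCone s := fun h => hpos (l1Norm_eq_coordSum h ▸ l1Norm_pos hw)
    simp only [indicator, mem_ofPred_eq, hcone, hpos, if_false]

lemma mem_l1Sphere_iff {e : EuclideanSpace ℝ (Fin d)} : e ∈ l1Sphere d ↔ l1Norm e = 1 := Iff.rfl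

lemma setLIntegral_nonnegCone_indicator_l1Sphere (κ : Measure (EuclideanSpace ℝ (Fin d)))
    (s : Finset (Fin d)) (Q : EuclideanSpace ℝ (Fin d) → ℝ≥0∞) :
    ∫⁻ e in nonnegCone s, (l1Sphere d).indicator Q (reflect s e) ∂κ =
      ∫⁻ e in {e | coordSum d e = 1}, (nonnegCone s).indicator (fun e => Q (reflect s e)) e ∂κ := by
  rw [← lintegral_indicator (measurableSet_nonnegCone s), ← lintegral_indicator
    (measurableSet_eq_fun (coordSum d).measurable measurable_const)]
  refine lintegral_congr fun e => ?_
  by_cases hcone : e ∈ nonnegCone s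
  · simp only [indicator, hcone, if_true, mem_ofPred_eq, mem_l1Sphere_iff, l1Norm_reflect,
      l1Norm_eq_coordSum hcone]
  · simp only [indicator, hcone, if_false, ite_self]

theorem exists_lintegral_eq_mul_l1Sphere (hd : 1 ≤ d) :
    ∃ c : ℝ≥0∞, ∀ (Q : EuclideanSpace ℝ (Fin d) → ℝ≥0∞) (ρ : ℝ → ℝ≥0∞),
      Measurable Q → Measurable ρ →
      ∫⁻ w, Q ((l1Norm w)⁻¹ • w) * ρ (l1Norm w) =
        c * (∫⁻ t in Ioi 0, ENNReal.ofReal (t ^ (d - 1)) * ρ t) *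
          ∫⁻ e in l1Sphere d, Q e ∂μH[(d : ℝ) - 1] := by
  have : Nonempty (Fin d) := ⟨⟨0, hd⟩⟩
  have hsum : coordSum d ≠ 0 := fun h => by
    simpa using DFunLike.congr_fun h (EuclideanSpace.single ⟨0, hd⟩ 1)
  obtain ⟨c, hc⟩ := exists_setLIntegral_pos_eq_mul volume hsum
  rw [finrank_euclideanSpace_fin] at hc
  refine ⟨c, fun Q ρ hQ hρ => ?_⟩
  have hvolume (s : Finset (Fin d)) := (reflect s).measurePreserving
  have hhausdorff (s : Finset (Fin d)) :=
    (reflect s).toIsometryEquiv.measurePreserving_hausdorffMeasure ((d : ℝ) - 1)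
  have hsphere : MeasurableSet (l1Sphere d) :=
    measurableSet_eq_fun continuous_l1Norm.measurable measurable_const
  rw [lintegral_eq_sum_nonnegCone hvolume, ← lintegral_indicator hsphere,
    lintegral_eq_sum_nonnegCone hhausdorff, Finset.mul_sum]
  refine Finset.sum_congr rfl fun s _ => ?_
  have hcone := measurableSet_nonnegCone s
  calc ∫⁻ w in nonnegCone s, Q ((l1Norm (reflect s w))⁻¹ • reflect s w) * ρ (l1Norm (reflect s w))
      = ∫⁻ w in nonnegCone s, Q (reflect s ((coordSum d w)⁻¹ • w)) * ρ (coordSum d w) :=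
        setLIntegral_congr_fun hcone fun w hw => by
          simp only [l1Norm_reflect, l1Norm_eq_coordSum hw, map_smul]
    _ = c * (∫⁻ t in Ioi 0, ENNReal.ofReal (t ^ (d - 1)) * ρ t) *
          ∫⁻ e in {e | coordSum d e = 1},
            (nonnegCone s).indicator (fun e => Q (reflect s e)) e ∂μH[(d : ℝ) - 1] := by
        rw [setLIntegral_nonnegCone_radial s fun w => Q (reflect s w)]
        exact hc _ _ ((hQ.comp (reflect s).continuous.measurable).indicator hcone) hρ
    _ = _ := by rw [setLIntegral_nonnegCone_indicator_l1Sphere]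

end Polar

section UniformGamma

variable {d : ℕ}

lemma factorial_mul_gammaPDF (hd : 1 ≤ d) {t : ℝ} (ht : 0 < t) :
    ((d - 1).factorial : ℝ≥0∞) * gammaPDF d 1 t =
      ENNReal.ofReal (t ^ (d - 1) * Real.exp (-t)) := by
  have hΓ : Real.Gamma d = (d - 1).factorial := by
    rw [← Real.Gamma_nat_eq_factorial, Nat.cast_sub hd, Nat.cast_one, sub_add_cancel]
  have hpow : t ^ ((d : ℝ) - 1) = t ^ (d - 1) := by
    rw [← Nat.cast_one, ← Nat.cast_sub hd, Real.rpow_natCast]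
  have hfact : ((d - 1).factorial : ℝ) ≠ 0 := by positivity
  rw [gammaPDF_of_nonneg ht.le, hΓ, hpow, ← ENNReal.ofReal_natCast,
    ← ENNReal.ofReal_mul (by positivity), Real.one_rpow, one_mul]
  field_simp

lemma factorial_mul_lintegral_gammaMeasure (hd : 1 ≤ d) {ρ : ℝ → ℝ≥0∞} (hρ : Measurable ρ) :
    ((d - 1).factorial : ℝ≥0∞) * ∫⁻ t, ρ t ∂(gammaMeasure d 1) =
      ∫⁻ t in Ioi 0, ENNReal.ofReal (t ^ (d - 1)) * (ENNReal.ofReal (Real.exp (-t)) * ρ t) := by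
  have hpdf : Measurable (gammaPDF d 1) := (measurable_gammaPDFReal _ _).ennreal_ofReal
  have hneg : ∫⁻ t in Iic 0, (gammaPDF d 1 * ρ) t = 0 := by
    rw [setLIntegral_congr Iio_ae_eq_Iic.symm]
    refine setLIntegral_eq_zero measurableSet_Iio fun t ht => ?_
    simp [gammaPDF_of_neg ht]
  rw [gammaMeasure, lintegral_withDensity_eq_lintegral_mul _ hpdf hρ,
    ← lintegral_add_compl _ (measurableSet_Ioi (a := 0)), compl_Ioi, hneg, add_zero,
    ← lintegral_const_mul' _ _ (by simp)]
  refine setLIntegral_congr_fun measurableSet_Ioi fun t (ht : 0 < t) => ?_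
  rw [Pi.mul_apply, ← mul_assoc, factorial_mul_gammaPDF hd ht, ENNReal.ofReal_mul (by positivity),
    mul_assoc]

-- The normalising constant of the polar decomposition is found by evaluating it on constants.
theorem lintegral_stdLaplace_polar (hd : 1 ≤ d) {Q : EuclideanSpace ℝ (Fin d) → ℝ≥0∞}
    {ρ : ℝ → ℝ≥0∞} (hQ : Measurable Q) (hρ : Measurable ρ) :
    ∫⁻ w, Q ((l1Norm w)⁻¹ • w) * ρ (l1Norm w) ∂(stdLaplace d) =
      (∫⁻ e, Q e ∂(uniformOnSphere (l1Sphere d))) * ∫⁻ t, ρ t ∂(gammaMeasure d 1) := by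
  have hprob : IsProbabilityMeasure (gammaMeasure d 1) :=
    isProbabilityMeasure_gammaMeasure (by exact_mod_cast hd) one_pos
  obtain ⟨c, hc⟩ := exists_lintegral_eq_mul_l1Sphere hd
  set C : ℝ≥0∞ := 2⁻¹ ^ d * c * (d - 1).factorial
  have hpolar {Q : EuclideanSpace ℝ (Fin d) → ℝ≥0∞} {ρ : ℝ → ℝ≥0∞} (hQ : Measurable Q)
      (hρ : Measurable ρ) : ∫⁻ w, Q ((l1Norm w)⁻¹ • w) * ρ (l1Norm w) ∂(stdLaplace d) =
        C * (∫⁻ t, ρ t ∂(gammaMeasure d 1)) * ∫⁻ e in l1Sphere d, Q e ∂μH[(d : ℝ) - 1] := by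
    have hweight := hc Q (fun t => ENNReal.ofReal (Real.exp (-t)) * ρ t) hQ (by fun_prop)
    rw [← factorial_mul_lintegral_gammaMeasure hd hρ] at hweight
    rw [lintegral_stdLaplace (by fun_prop)]
    simp only [mul_assoc, mul_comm (ρ _), hweight]
    ring
  have hnormalize : C * μH[(d : ℝ) - 1] (l1Sphere d) = 1 := by
    simpa using (hpolar measurable_one measurable_one).symm
  rw [hpolar hQ hρ, uniformOnSphere, lintegral_smul_measure, smul_eq_mul,
    ENNReal.eq_inv_of_mul_eq_one_left hnormalize]
  ring

end UniformGamma

section SphereMoments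

variable {d : ℕ}

lemma isProbabilityMeasure_uniformOnSphere_l1Sphere (hd : 1 ≤ d) :
    IsProbabilityMeasure (uniformOnSphere (l1Sphere d)) := by
  have hprob : IsProbabilityMeasure (gammaMeasure d 1) :=
    isProbabilityMeasure_gammaMeasure (by exact_mod_cast hd) one_pos
  constructor
  simpa using (lintegral_stdLaplace_polar hd measurable_one measurable_one).symm

lemma lintegral_pow_gammaMeasure (hd : 1 ≤ d) (k : ℕ) :
    ∫⁻ t, ENNReal.ofReal (t ^ k) ∂(gammaMeasure d 1) = d.ascFactorial k := by
  have hfact : ((d - 1).factorial : ℝ≥0∞) ≠ 0 := by positivity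
  refine (ENNReal.mul_right_inj hfact (ENNReal.natCast_ne_top _)).1 ?_
  rw [factorial_mul_lintegral_gammaMeasure hd (by fun_prop), ← Nat.cast_mul,
    Nat.factorial_mul_ascFactorial' _ _ hd, ← setLIntegral_Ioi_pow_mul_exp_neg]
  refine setLIntegral_congr_fun measurableSet_Ioi fun t (ht : 0 < t) => ?_
  rw [← ENNReal.ofReal_mul (by positivity), ← ENNReal.ofReal_mul (by positivity),
    Nat.sub_add_comm hd, pow_add]
  congr 1
  ring

lemma ae_nonneg_gammaMeasure (a r : ℝ) : ∀ᵐ t ∂(gammaMeasure a r), 0 ≤ t := by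
  have hpdf : Measurable (gammaPDF a r) := (measurable_gammaPDFReal a r).ennreal_ofReal
  rw [gammaMeasure, ae_withDensity_iff hpdf]
  exact ae_of_all _ fun t ht => not_lt.1 fun hneg => ht (gammaPDF_of_neg hneg)

lemma lintegral_enorm_sub_sq_gammaMeasure (hd : 1 ≤ d) :
    ∫⁻ t, ‖t - d‖ₑ ^ 2 ∂(gammaMeasure d 1) = d := by
  have hprob : IsProbabilityMeasure (gammaMeasure d 1) :=
    isProbabilityMeasure_gammaMeasure (by exact_mod_cast hd) one_pos
  have hexpand : ∀ᵐ t : ℝ ∂(gammaMeasure d 1),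
      ‖t - d‖ₑ ^ 2 + 2 * d * ENNReal.ofReal (t ^ 1) = ENNReal.ofReal (t ^ 2) + d ^ 2 := by
    filter_upwards [ae_nonneg_gammaMeasure d 1] with t ht
    rw [enorm_sq_eq_ofReal_sq, ← ENNReal.ofReal_natCast, ← ENNReal.ofReal_ofNat 2,
      ← ENNReal.ofReal_mul zero_le_two, ← ENNReal.ofReal_mul (by positivity),
      ← ENNReal.ofReal_pow (by positivity), ← ENNReal.ofReal_add (by positivity) (by positivity),
      ← ENNReal.ofReal_add (by positivity) (by positivity)]
    congr 1
    ring
  have hint := lintegral_congr_ae hexpand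
  rw [lintegral_add_left (by fun_prop), lintegral_add_right _ measurable_const,
    lintegral_const_mul _ (by fun_prop), lintegral_pow_gammaMeasure hd,
    lintegral_pow_gammaMeasure hd] at hint
  simp only [Nat.ascFactorial, lintegral_const, measure_univ, mul_one, add_zero] at hint
  refine (ENNReal.add_left_inj (a := 2 * d * d) (by finiteness)).1 (hint.trans ?_)
  push_cast
  ring

lemma l1Norm_smul_inv_smul (w : EuclideanSpace ℝ (Fin d)) :
    l1Norm w • (l1Norm w)⁻¹ • w = w := by
  obtain rfl | hw := eq_or_ne w 0
  · simp
  · rw [smul_inv_smul₀ (l1Norm_pos hw).ne']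

lemma lintegral_enorm_sq_uniformOnSphere (hd : 1 ≤ d) :
    (∫⁻ e, ‖e‖ₑ ^ 2 ∂(uniformOnSphere (l1Sphere d))) * (d + 1) = 2 := by
  have hnorm (w : EuclideanSpace ℝ (Fin d)) :
      ‖w‖ₑ ^ 2 = ‖(l1Norm w)⁻¹ • w‖ₑ ^ 2 * ENNReal.ofReal (l1Norm w ^ 2) := by
    conv_lhs => rw [← l1Norm_smul_inv_smul w]
    rw [enorm_smul, mul_pow, enorm_sq_eq_ofReal_sq, mul_comm]
  have hpolar := lintegral_stdLaplace_polar hd (Q := fun e => ‖e‖ₑ ^ 2)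
    (ρ := fun t => ENNReal.ofReal (t ^ 2)) (by fun_prop) (by fun_prop)
  simp only [← hnorm, lintegral_enorm_sq_stdLaplace, lintegral_pow_gammaMeasure hd] at hpolar
  have hd0 : (d : ℝ≥0∞) ≠ 0 := by exact_mod_cast (Nat.one_le_iff_ne_zero.1 hd)
  refine (ENNReal.mul_left_inj hd0 (ENNReal.natCast_ne_top d)).1 ?_
  rw [hpolar]
  simp [Nat.ascFactorial]
  ring

lemma enorm_sq_le_two_mul_add (a b : ℝ) : ‖a‖ₑ ^ 2 ≤ 2 * ‖b‖ₑ ^ 2 + 2 * ‖a - b‖ₑ ^ 2 := by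
  simp only [enorm_sq_eq_ofReal_sq]
  rw [← ENNReal.ofReal_ofNat 2, ← ENNReal.ofReal_mul zero_le_two, ← ENNReal.ofReal_mul zero_le_two,
    ← ENNReal.ofReal_add (by positivity) (by positivity)]
  exact ENNReal.ofReal_le_ofReal (by nlinarith [sq_nonneg (a - 2 * b)])

lemma lipschitzWith_mul_comp_inv_smul {E : Type*} [SeminormedAddCommGroup E] [NormedSpace ℝ E]
    {F : E → ℝ} {K : NNReal} (hF : LipschitzWith K F) {c : ℝ} (hc : c ≠ 0) :
    LipschitzWith K fun w => c * F (c⁻¹ • w) := by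
  have hcomp := ((lipschitzWith_smul c).comp hF).comp (lipschitzWith_smul (c⁻¹ : ℝ) (β := E))
  rwa [mul_right_comm, ← nnnorm_mul, mul_inv_cancel₀ hc, nnnorm_one, one_mul] at hcomp

lemma enorm_mul_comp_inv_smul_sub_le {F : EuclideanSpace ℝ (Fin d) → ℝ} {K : NNReal}
    (hF : LipschitzWith K F) {c : ℝ} (hc : c ≠ 0) (w : EuclideanSpace ℝ (Fin d)) :
    ‖c * F ((l1Norm w)⁻¹ • w) - c * F (c⁻¹ • w)‖ₑ ≤
      K * (‖(l1Norm w)⁻¹ • w‖ₑ * ‖l1Norm w - c‖ₑ) := by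
  have hsplit : c • (l1Norm w)⁻¹ • w - w = (c - l1Norm w) • (l1Norm w)⁻¹ • w := by
    rw [sub_smul, l1Norm_smul_inv_smul]
  calc ‖c * F ((l1Norm w)⁻¹ • w) - c * F (c⁻¹ • w)‖ₑ
      ≤ K * ‖c • (l1Norm w)⁻¹ • w - w‖ₑ := by
        simpa only [edist_eq_enorm_sub, inv_smul_smul₀ hc] using
          lipschitzWith_mul_comp_inv_smul hF hc (c • (l1Norm w)⁻¹ • w) w
    _ = K * (‖(l1Norm w)⁻¹ • w‖ₑ * ‖l1Norm w - c‖ₑ) := by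
        rw [hsplit, enorm_smul, ← enorm_neg (c - l1Norm w), neg_sub, mul_comm ‖_‖ₑ]

lemma lintegral_uniformOnSphere_eq_stdLaplace (hd : 1 ≤ d)
    {Q : EuclideanSpace ℝ (Fin d) → ℝ≥0∞} (hQ : Measurable Q) :
    ∫⁻ e, Q e ∂(uniformOnSphere (l1Sphere d)) =
      ∫⁻ w, Q ((l1Norm w)⁻¹ • w) ∂(stdLaplace d) := by
  have hprob : IsProbabilityMeasure (gammaMeasure d 1) :=
    isProbabilityMeasure_gammaMeasure (by exact_mod_cast hd) one_pos
  simpa using (lintegral_stdLaplace_polar hd hQ measurable_one).symm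

lemma lintegral_enorm_sq_mul_enorm_sub_sq_stdLaplace_le (hd : 1 ≤ d) :
    ∫⁻ w, ‖(l1Norm w)⁻¹ • w‖ₑ ^ 2 * ‖l1Norm w - d‖ₑ ^ 2 ∂(stdLaplace d) ≤ 2 := by
  calc ∫⁻ w, ‖(l1Norm w)⁻¹ • w‖ₑ ^ 2 * ‖l1Norm w - d‖ₑ ^ 2 ∂(stdLaplace d)
      = (∫⁻ e, ‖e‖ₑ ^ 2 ∂(uniformOnSphere (l1Sphere d))) * d := by
        rw [lintegral_stdLaplace_polar hd (Q := fun e => ‖e‖ₑ ^ 2) (ρ := fun t => ‖t - d‖ₑ ^ 2)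
          (by fun_prop) (by fun_prop), lintegral_enorm_sub_sq_gammaMeasure hd]
    _ ≤ (∫⁻ e, ‖e‖ₑ ^ 2 ∂(uniformOnSphere (l1Sphere d))) * (d + 1) := by
        gcongr
        exact le_self_add
    _ = 2 := lintegral_enorm_sq_uniformOnSphere hd

-- The radius `r = ‖w‖₁` concentrates at `d`, so `d F(w / r)` is close to `d F(w / d)`, which is
-- `K`-Lipschitz in `w`.
theorem lintegral_sq_uniformOnSphere_le_of_odd (hd : 1 ≤ d) {F : EuclideanSpace ℝ (Fin d) → ℝ}
    {K : NNReal} (hF : LipschitzWith K F) (hodd : Function.Odd F) :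
    d ^ 2 * ∫⁻ e, ‖F e‖ₑ ^ 2 ∂(uniformOnSphere (l1Sphere d)) ≤ 12 * (K : ℝ≥0∞) ^ 2 := by
  have hd0 : (d : ℝ) ≠ 0 := by exact_mod_cast (Nat.one_le_iff_ne_zero.1 hd)
  have hFm : Measurable F := hF.continuous.measurable
  set h : EuclideanSpace ℝ (Fin d) → ℝ := fun w => d * F ((d : ℝ)⁻¹ • w)
  have hh : LipschitzWith K h := lipschitzWith_mul_comp_inv_smul hF hd0
  have hhodd : Function.Odd h := fun w => by simp [h, hodd _]
  have hpointwise (w : EuclideanSpace ℝ (Fin d)) :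
      (d : ℝ≥0∞) ^ 2 * ‖F ((l1Norm w)⁻¹ • w)‖ₑ ^ 2 ≤ 2 * ‖h w‖ₑ ^ 2 +
        2 * K ^ 2 * (‖(l1Norm w)⁻¹ • w‖ₑ ^ 2 * ‖l1Norm w - d‖ₑ ^ 2) := by
    calc (d : ℝ≥0∞) ^ 2 * ‖F ((l1Norm w)⁻¹ • w)‖ₑ ^ 2
        = ‖d * F ((l1Norm w)⁻¹ • w)‖ₑ ^ 2 := by simp [enorm_mul, mul_pow]
      _ ≤ 2 * ‖h w‖ₑ ^ 2 + 2 * ‖d * F ((l1Norm w)⁻¹ • w) - h w‖ₑ ^ 2 :=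
          enorm_sq_le_two_mul_add _ _
      _ ≤ 2 * ‖h w‖ₑ ^ 2 + 2 * (K * (‖(l1Norm w)⁻¹ • w‖ₑ * ‖l1Norm w - d‖ₑ)) ^ 2 := by
          gcongr
          exact enorm_mul_comp_inv_smul_sub_le hF hd0 w
      _ = _ := by ring
  calc d ^ 2 * ∫⁻ e, ‖F e‖ₑ ^ 2 ∂(uniformOnSphere (l1Sphere d))
      = ∫⁻ w, d ^ 2 * ‖F ((l1Norm w)⁻¹ • w)‖ₑ ^ 2 ∂(stdLaplace d) := by
        rw [← lintegral_const_mul _ (by fun_prop),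
          lintegral_uniformOnSphere_eq_stdLaplace hd (by fun_prop)]
    _ ≤ 2 * (∫⁻ w, ‖h w‖ₑ ^ 2 ∂(stdLaplace d)) + 2 * K ^ 2 *
          ∫⁻ w, ‖(l1Norm w)⁻¹ • w‖ₑ ^ 2 * ‖l1Norm w - d‖ₑ ^ 2 ∂(stdLaplace d) := by
        refine (lintegral_mono hpointwise).trans_eq ?_
        rw [lintegral_add_left (by fun_prop), lintegral_const_mul _ (by fun_prop),
          lintegral_const_mul' _ _ (by finiteness)]
    _ ≤ 2 * (4 * K ^ 2) + 2 * K ^ 2 * 2 := by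
        gcongr
        · exact lintegral_enorm_sq_stdLaplace_le_of_odd hh hhodd
        · exact lintegral_enorm_sq_mul_enorm_sub_sq_stdLaplace_le hd
    _ = 12 * (K : ℝ≥0∞) ^ 2 := by ring

end SphereMoments

section Estimator

variable {d : ℕ}

lemma lpNorm_nonneg_s5 (q : ℝ≥0∞) (x : EuclideanSpace ℝ (Fin d)) : 0 ≤ lpNorm q x := by
  unfold _root_.lpNorm
  split_ifs
  · exact Real.iSup_nonneg fun i => abs_nonneg _
  · positivity

lemma lpNorm_le_of_forall_abs_le {q : ℝ≥0∞} (hq : q ≠ 0) {x : EuclideanSpace ℝ (Fin d)} {a : ℝ}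
    (ha : 0 ≤ a) (hx : ∀ i, |x i| ≤ a) : lpNorm q x ≤ d ^ (q⁻¹).toReal * a := by
  unfold _root_.lpNorm
  split_ifs with hq_top
  · simpa [hq_top] using Real.iSup_le hx ha
  · have hq_pos : 0 < q.toReal := ENNReal.toReal_pos hq hq_top
    calc (∑ i, |x i| ^ q.toReal) ^ (1 / q.toReal)
        ≤ (∑ _i : Fin d, a ^ q.toReal) ^ (1 / q.toReal) := by
          gcongr with i
          exact hx i
      _ = d ^ (q⁻¹).toReal * a := by
          rw [Finset.sum_const, Finset.card_univ, Fintype.card_fin, nsmul_eq_mul,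
            Real.mul_rpow (by positivity) (by positivity), one_div,
            Real.rpow_rpow_inv ha hq_pos.ne', ENNReal.toReal_inv]

lemma abs_sign_le_one (t : ℝ) : |Real.sign t| ≤ 1 := by
  obtain h | h | h := Real.sign_apply_eq t <;> simp [h]

lemma lpNorm_smul_signVec_sq_le {q : ℝ≥0∞} (hq : q ≠ 0) (a : ℝ)
    (e : EuclideanSpace ℝ (Fin d)) :
    lpNorm q (a • signVec e) ^ 2 ≤ d ^ (2 * (q⁻¹).toReal) * a ^ 2 := by
  have hcoord (i : Fin d) : |(a • signVec e) i| ≤ |a| := by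
    simpa [signVec, abs_mul] using mul_le_of_le_one_right (abs_nonneg a) (abs_sign_le_one (e i))
  calc lpNorm q (a • signVec e) ^ 2
      ≤ ((d : ℝ) ^ (q⁻¹).toReal * |a|) ^ 2 := by
        gcongr
        · exact lpNorm_nonneg_s5 q _
        · exact lpNorm_le_of_forall_abs_le hq (abs_nonneg a) hcoord
    _ = d ^ (2 * (q⁻¹).toReal) * a ^ 2 := by
        rw [mul_pow, sq_abs, mul_comm 2, Real.rpow_mul d.cast_nonneg, Real.rpow_two]

lemma sq_add_sub_add_le {u v α β Δ : ℝ} (hα : |α| ≤ Δ) (hβ : |β| ≤ Δ) :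
    ((u + α) - (v + β)) ^ 2 ≤ 2 * (u - v) ^ 2 + 8 * Δ ^ 2 := by
  have hαβ : (α - β) ^ 2 ≤ (2 * Δ) ^ 2 :=
    sq_le_sq' (by linarith [abs_le.1 hα, abs_le.1 hβ]) (by linarith [abs_le.1 hα, abs_le.1 hβ])
  nlinarith [sq_nonneg ((u - v) - (α - β))]

/-- The two-point `l₁`-randomized gradient estimator of `F` at `x` with smoothing parameter `γ` in
the direction `e`. -/
noncomputable def twoPointEstimator (γ : ℝ) (F : EuclideanSpace ℝ (Fin d) → ℝ)
    (x e : EuclideanSpace ℝ (Fin d)) : EuclideanSpace ℝ (Fin d) :=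
  (d / (2 * γ) * (F (x + γ • e) - F (x - γ • e))) • signVec e

lemma lipschitzWith_add_smul_sub_sub_smul {E : Type*} [SeminormedAddCommGroup E] [NormedSpace ℝ E]
    {f : E → ℝ} {K : NNReal} (hf : LipschitzWith K f) (γ : ℝ) (x : E) :
    LipschitzWith (2 * ‖γ‖₊ * K) fun e => f (x + γ • e) - f (x - γ • e) := by
  have hsmul : LipschitzWith ‖γ‖₊ fun e : E => γ • e := lipschitzWith_smul γ
  have hadd : LipschitzWith ‖γ‖₊ fun e => x + γ • e := by
    simpa using (LipschitzWith.const x).add hsmul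
  have hsub : LipschitzWith ‖γ‖₊ fun e => x - γ • e := by
    simpa using (LipschitzWith.const x).sub hsmul
  exact ((hf.comp hadd).sub (hf.comp hsub)).weaken (by ring_nf; rfl)

lemma lintegral_enorm_add_smul_sub_sub_smul_sq_le (hd : 1 ≤ d)
    {f : EuclideanSpace ℝ (Fin d) → ℝ} {K : NNReal} (hf : LipschitzWith K f) (γ : ℝ)
    (x : EuclideanSpace ℝ (Fin d)) :
    d ^ 2 * ∫⁻ e, ‖f (x + γ • e) - f (x - γ • e)‖ₑ ^ 2 ∂(uniformOnSphere (l1Sphere d)) ≤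
      48 * ‖γ‖ₑ ^ 2 * (K : ℝ≥0∞) ^ 2 := by
  have hodd : Function.Odd fun e => f (x + γ • e) - f (x - γ • e) := fun e => by
    simp [sub_eq_add_neg]
  refine (lintegral_sq_uniformOnSphere_le_of_odd hd
    (lipschitzWith_add_smul_sub_sub_smul hf γ x) hodd).trans_eq ?_
  simp only [ENNReal.coe_mul, ENNReal.coe_ofNat, enorm]
  ring

lemma lpNorm_twoPointEstimator_sq_le {q : ℝ≥0∞} (hq : q ≠ 0) (γ : ℝ)
    (f : EuclideanSpace ℝ (Fin d) → ℝ) {δ : EuclideanSpace ℝ (Fin d) → ℝ} {Δ : ℝ}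
    (hδ : ∀ y, |δ y| ≤ Δ) (x e : EuclideanSpace ℝ (Fin d)) :
    lpNorm q (twoPointEstimator γ (fun y => f y + δ y) x e) ^ 2 ≤
      d ^ (2 * (q⁻¹).toReal) * ((2 * γ ^ 2)⁻¹ * (d ^ 2 * (f (x + γ • e) - f (x - γ • e)) ^ 2) +
        2 * d ^ 2 * Δ ^ 2 / γ ^ 2) := by
  refine (lpNorm_smul_signVec_sq_le hq _ e).trans ?_
  gcongr
  calc (d / (2 * γ) * (f (x + γ • e) + δ (x + γ • e) - (f (x - γ • e) + δ (x - γ • e)))) ^ 2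
      ≤ (d / (2 * γ)) ^ 2 * (2 * (f (x + γ • e) - f (x - γ • e)) ^ 2 + 8 * Δ ^ 2) := by
        rw [mul_pow]
        gcongr
        exact sq_add_sub_add_le (hδ _) (hδ _)
    _ = _ := by ring

lemma lintegral_lpNorm_twoPointEstimator_sq_le (hd : 1 ≤ d) {q : ℝ≥0∞} (hq : q ≠ 0) {γ : ℝ}
    (hγ : γ ≠ 0) {f : EuclideanSpace ℝ (Fin d) → ℝ} {K : NNReal} (hf : LipschitzWith K f)
    {δ : EuclideanSpace ℝ (Fin d) → ℝ} {Δ : ℝ} (hδ : ∀ y, |δ y| ≤ Δ)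
    (x : EuclideanSpace ℝ (Fin d)) :
    ∫⁻ e, ENNReal.ofReal (lpNorm q (twoPointEstimator γ (fun y => f y + δ y) x e) ^ 2)
        ∂(uniformOnSphere (l1Sphere d)) ≤
      ENNReal.ofReal (d ^ (2 * (q⁻¹).toReal)) *
        (24 * (K : ℝ≥0∞) ^ 2 + ENNReal.ofReal (2 * d ^ 2 * Δ ^ 2 / γ ^ 2)) := by
  have hprob := isProbabilityMeasure_uniformOnSphere_l1Sphere hd
  set D : EuclideanSpace ℝ (Fin d) → ℝ := fun e => f (x + γ • e) - f (x - γ • e)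
  have hD : Measurable D := (lipschitzWith_add_smul_sub_sub_smul hf γ x).continuous.measurable
  have hpointwise (e : EuclideanSpace ℝ (Fin d)) :
      ENNReal.ofReal (lpNorm q (twoPointEstimator γ (fun y => f y + δ y) x e) ^ 2) ≤
        ENNReal.ofReal (d ^ (2 * (q⁻¹).toReal)) * (ENNReal.ofReal (2 * γ ^ 2)⁻¹ *
          (d ^ 2 * ‖D e‖ₑ ^ 2) + ENNReal.ofReal (2 * d ^ 2 * Δ ^ 2 / γ ^ 2)) := by
    refine (ENNReal.ofReal_le_ofReal (lpNorm_twoPointEstimator_sq_le hq γ f hδ x e)).trans_eq ?_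
    rw [ENNReal.ofReal_mul (by positivity), ENNReal.ofReal_add (by positivity) (by positivity),
      ENNReal.ofReal_mul (by positivity), ENNReal.ofReal_mul (by positivity),
      ENNReal.ofReal_pow (by positivity), ENNReal.ofReal_natCast, enorm_sq_eq_ofReal_sq]
  have hscale : ENNReal.ofReal (2 * γ ^ 2)⁻¹ * (48 * ‖γ‖ₑ ^ 2) = 24 := by
    rw [enorm_sq_eq_ofReal_sq, ← ENNReal.ofReal_ofNat 48, ← ENNReal.ofReal_mul (by positivity),
      ← ENNReal.ofReal_mul (by positivity), ← ENNReal.ofReal_ofNat 24]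
    congr 1
    field_simp
    norm_num
  refine (lintegral_mono hpointwise).trans ?_
  rw [lintegral_const_mul _ (by fun_prop), lintegral_add_right _ measurable_const,
    lintegral_const_mul _ (by fun_prop), lintegral_const_mul _ (by fun_prop), lintegral_const,
    measure_univ, mul_one, ← hscale, mul_assoc (ENNReal.ofReal (2 * γ ^ 2)⁻¹)]
  gcongr _ * (_ * ?_ + _)
  exact lintegral_enorm_add_smul_sub_sub_smul_sq_le hd hf γ x

lemma ne_zero_of_one_div_add_one_div_eq_one {p q : ℝ≥0∞} (hpq : 1 / p + 1 / q = 1) : q ≠ 0 := by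
  rintro rfl
  simp at hpq

lemma two_mul_toReal_inv_of_one_div_add_one_div_eq_one {p q : ℝ≥0∞} (hpq : 1 / p + 1 / q = 1) :
    2 * (q⁻¹).toReal = 2 - 2 / p.toReal := by
  rw [one_div, one_div] at hpq
  have hp_inv : p⁻¹ ≠ ∞ := (le_self_add.trans_eq hpq).trans_lt ENNReal.one_lt_top |>.ne
  have hq_inv : q⁻¹ ≠ ∞ := (le_add_self.trans_eq hpq).trans_lt ENNReal.one_lt_top |>.ne
  have hsum := congrArg ENNReal.toReal hpq
  rw [ENNReal.toReal_add hp_inv hq_inv, ENNReal.toReal_inv p, ENNReal.toReal_one] at hsum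
  rw [div_eq_mul_inv]
  linarith

lemma mul_add_le_mul_one_add_sqrt_two {C D : ℝ} (hC : 0 ≤ C) (hD : 0 ≤ D) (M γ : ℝ) :
    C * (24 * M ^ 2 + 2 * D / γ ^ 2) ≤
      48 * (1 + √2) ^ 2 * C * (M ^ 2 + D / (12 * (1 + √2) ^ 2 * γ ^ 2)) := by
  have hsqrt : 1 ≤ (1 + √2) ^ 2 := one_le_pow₀ (by simp)
  calc C * (24 * M ^ 2 + 2 * D / γ ^ 2)
      ≤ C * (48 * (1 + √2) ^ 2 * M ^ 2 + 4 * D / γ ^ 2) := by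
        gcongr
        · linarith
        · norm_num
    _ = _ := by
        field_simp
        ring

end Estimator

theorem two_point_l1_second_moment_general {d : ℕ} (hd : 1 ≤ d) {γ Δ M₂ : ℝ} (hγ : γ ≠ 0)
    {q : ℝ≥0∞} (hq : q ≠ 0) {Ω : Type*} [MeasurableSpace Ω] (μξ : Measure Ω)
    [IsProbabilityMeasure μξ] (f : EuclideanSpace ℝ (Fin d) → Ω → ℝ) (M₂fun : Ω → ℝ)
    (hlip : ∀ ω, ∀ x y : EuclideanSpace ℝ (Fin d), |f y ω - f x ω| ≤ M₂fun ω * ‖y - x‖)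
    (hM : ∫⁻ ω, ENNReal.ofReal (M₂fun ω ^ 2) ∂μξ ≤ ENNReal.ofReal (M₂ ^ 2))
    (δ : EuclideanSpace ℝ (Fin d) → ℝ) (hδ : ∀ x, |δ x| ≤ Δ) (x : EuclideanSpace ℝ (Fin d)) :
    ∫⁻ z, ENNReal.ofReal
        (lpNorm q (twoPointEstimator γ (fun y => f y z.1 + δ y) x z.2) ^ 2)
        ∂(μξ.prod (uniformOnSphere (l1Sphere d))) ≤
      ENNReal.ofReal (d ^ (2 * (q⁻¹).toReal) * (24 * M₂ ^ 2 + 2 * d ^ 2 * Δ ^ 2 / γ ^ 2)) := by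
  have hlip' (ω : Ω) : LipschitzWith ‖M₂fun ω‖₊ fun y => f y ω :=
    .of_dist_le_mul fun y z => by
      rw [Real.dist_eq, dist_eq_norm]
      exact (hlip ω z y).trans (by gcongr; exact le_abs_self _)
  calc _ ≤ ∫⁻ ω, ENNReal.ofReal (d ^ (2 * (q⁻¹).toReal)) * (24 * ENNReal.ofReal (M₂fun ω ^ 2) +
          ENNReal.ofReal (2 * d ^ 2 * Δ ^ 2 / γ ^ 2)) ∂μξ := by
        refine (lintegral_prod_le _).trans (lintegral_mono fun ω => ?_)
        rw [← enorm_sq_eq_ofReal_sq]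
        exact lintegral_lpNorm_twoPointEstimator_sq_le hd hq hγ (hlip' ω) hδ x
    _ ≤ ENNReal.ofReal (d ^ (2 * (q⁻¹).toReal)) * (24 * ENNReal.ofReal (M₂ ^ 2) +
          ENNReal.ofReal (2 * d ^ 2 * Δ ^ 2 / γ ^ 2)) := by
        rw [lintegral_const_mul' _ _ ENNReal.ofReal_ne_top, lintegral_add_right _ measurable_const,
          lintegral_const_mul' _ _ ENNReal.ofNat_ne_top, lintegral_const, measure_univ, mul_one]
        gcongr
    _ = _ := by
        rw [ENNReal.ofReal_mul (by positivity), ENNReal.ofReal_add (by positivity) (by positivity),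
          ENNReal.ofReal_mul (by positivity), ENNReal.ofReal_ofNat]

/-- Second-moment bound for the two-point `l₁`-randomized gradient
estimator `g(x,ξ,e) = (d/(2γ))·(f_δ(x+γe,ξ) − f_δ(x−γe,ξ))·sign(e)`, `e` uniform on the
unit `l₁`-sphere: `E[‖g‖_q²] ≤ κ(p,d)·(M₂² + d²Δ²/(12(1+√2)²γ²))` with
`κ(p,d) = 48(1+√2)²·d^{2−2/p}`. -/
theorem two_point_l1_second_moment {d : ℕ} (hd : 1 ≤ d) (γ Δ M₂ : ℝ) (hγ : 0 < γ) (hΔ : 0 ≤ Δ)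
    (p q : ℝ≥0∞) (hp1 : 1 ≤ p) (hp2 : p ≤ 2) (hpq : 1 / p + 1 / q = 1)
    {Ω : Type*} [MeasurableSpace Ω] (μξ : Measure Ω) [IsProbabilityMeasure μξ]
    (f : EuclideanSpace ℝ (Fin d) → Ω → ℝ)
    (hfm : Measurable (Function.uncurry f))
    (M₂fun : Ω → ℝ) (hMm : Measurable M₂fun)
    (hlip : ∀ ω, ∀ x y : EuclideanSpace ℝ (Fin d), |f y ω - f x ω| ≤ M₂fun ω * ‖y - x‖)
    (hM : ∫⁻ ω, ENNReal.ofReal (M₂fun ω ^ 2) ∂μξ ≤ ENNReal.ofReal (M₂ ^ 2))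
    (δ : EuclideanSpace ℝ (Fin d) → ℝ) (hδm : Measurable δ)
    (hδ : ∀ x : EuclideanSpace ℝ (Fin d), |δ x| ≤ Δ)
    (x : EuclideanSpace ℝ (Fin d)) :
    ∫⁻ z : Ω × EuclideanSpace ℝ (Fin d),
        ENNReal.ofReal
          ((lpNorm q ((d / (2 * γ) *
              ((f (x + γ • z.2) z.1 + δ (x + γ • z.2)) -
                (f (x - γ • z.2) z.1 + δ (x - γ • z.2)))) • signVec z.2)) ^ 2)
        ∂(μξ.prod (uniformOnSphere (l1Sphere d)))
      ≤ ENNReal.ofReal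
          ((48 * (1 + Real.sqrt 2) ^ 2 * (d : ℝ) ^ ((2 : ℝ) - 2 / p.toReal)) *
            (M₂ ^ 2 + d ^ 2 * Δ ^ 2 / (12 * (1 + Real.sqrt 2) ^ 2 * γ ^ 2))) := by
  refine (two_point_l1_second_moment_general hd hγ.ne' (ne_zero_of_one_div_add_one_div_eq_one hpq)
    μξ f M₂fun hlip hM δ hδ x).trans (ENNReal.ofReal_le_ofReal ?_)
  rw [two_mul_toReal_inv_of_one_div_add_one_div_eq_one hpq, mul_assoc 2]
  exact mul_add_le_mul_one_add_sqrt_two (by positivity) (by positivity) M₂ γ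
end
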